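/- arXiv:2109.14494 — 3 statements merged into one kernel-verified Lean document; each statement's English description precedes it below -/
import Mathlib

section
/- Let S be a set of Hermitian polynomials in ℂ[x,x̄] such that the quadratic module 𝓜(S) is Archimedean, and let L : ℂ[x,x̄] → ℂ be a Hermitian linear functional that is nonnegative on 𝓜(S). Then there exists a finite positive Borel measure μ on ℂ^n with μ(ℂ^n \ 𝒟(S)) = 0 such that L(p) = ∫_{ℂ^n} p(u) dμ(u) for every polynomial p ∈ ℂ[x,x̄] (where p(u) denotes evaluation at (u, ū)). -/
/-!
The proof is the Gelfand–Naimark–Segal construction followed by Gelfand duality and the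
Riesz–Markov–Kakutani theorem.

The functional `L` defines the positive semidefinite form `⟪p, q⟫ = L(p̄ q)` on `ℂ[x,x̄]`. Since
`R - ∑ x_i x̄_i ∈ 𝓜(S)` and `𝓜(S)` is stable under multiplication by `q q̄`, multiplication by
`x_i` or `x̄_i` has norm at most `√R` for this form (`exists_mul_bound`), so multiplication by any
polynomial is bounded. The multiplication operators therefore extend to the Hilbert space
completion and give a `*`-representation `π` of `ℂ[x,x̄]` (`exists_rep_completion`), with
`L(p) = ⟪1, π(p) 1⟫`.

The norm closure `A` of the range of `π` is a commutative C⋆-algebra. By Gelfand duality and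
Riesz–Markov–Kakutani the functional `T ↦ ⟪1, T 1⟫` on `A` is integration against a finite measure
on the characters of `A` (`exists_measure_characterSpace`). A character `χ` composed with `π` is
evaluation at the point `u = (χ(π(x_i)))_i`, because `χ` is `*`-preserving. The image of the
measure under `χ ↦ u` represents `L`, and it charges only points with `p(u) ∈ σ(π(p))` for all `p`
(`exists_measure_of_rep`). For `g ∈ S` one has `⟪g p, p⟫ = L(g p p̄) ≥ 0`, so `π(g)` is a positive
operator, its spectrum is nonnegative (`nonneg_of_mem_spectrum`), and hence `g(u) ≥ 0`.
-/

open MvPolynomial ComplexOrder MeasureTheory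

/-- The conjugate polynomial: conjugate all coefficients and exchange each
variable `x_i` (encoded `Sum.inl i`) with `x̄_i` (encoded `Sum.inr i`). -/
noncomputable def cconj {n : ℕ} (p : MvPolynomial (Fin n ⊕ Fin n) ℂ) :
    MvPolynomial (Fin n ⊕ Fin n) ℂ :=
  rename (Sum.elim Sum.inr Sum.inl) (map (starRingEnd ℂ) p)

/-- Evaluation of `p ∈ ℂ[x,x̄]` at `u ∈ ℂ^n`: substitute `u_i` for `x_i`
and `conj (u_i)` for `x̄_i`. -/
noncomputable def cEval {n : ℕ} (u : Fin n → ℂ) (p : MvPolynomial (Fin n ⊕ Fin n) ℂ) : ℂ :=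
  eval (Sum.elim u fun i => starRingEnd ℂ (u i)) p

/-- The (untruncated) quadratic module `𝓜(S)` generated by `S`. -/
def QMfull {n : ℕ} (S : Set (MvPolynomial (Fin n ⊕ Fin n) ℂ)) :
    Set (MvPolynomial (Fin n ⊕ Fin n) ℂ) :=
  { q | ∃ (N : ℕ) (c : Fin N → ℝ) (g p : Fin N → MvPolynomial (Fin n ⊕ Fin n) ℂ),
      (∀ s, 0 ≤ c s) ∧ (∀ s, g s ∈ S ∪ {1}) ∧
      q = ∑ s, C (c s : ℂ) * (g s * (p s * cconj (p s))) }

open scoped InnerProductSpace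

/-! ### Conjugate polynomials and the quadratic module -/

section conj
variable {n : ℕ}

theorem cconj_add (p q : MvPolynomial (Fin n ⊕ Fin n) ℂ) :
    cconj (p + q) = cconj p + cconj q := by simp [cconj]

theorem cconj_mul (p q : MvPolynomial (Fin n ⊕ Fin n) ℂ) :
    cconj (p * q) = cconj p * cconj q := by simp [cconj]

theorem cconj_C (a : ℂ) : cconj (n := n) (C a) = C (starRingEnd ℂ a) := by simp [cconj]

theorem cconj_smul (a : ℂ) (p : MvPolynomial (Fin n ⊕ Fin n) ℂ) :
    cconj (a • p) = starRingEnd ℂ a • cconj p := by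
  rw [smul_eq_C_mul, smul_eq_C_mul, cconj_mul, cconj_C]

theorem cconj_X_inl (i : Fin n) : cconj (X (Sum.inl i)) = X (Sum.inr i) := by simp [cconj]

theorem cconj_X_inr (i : Fin n) : cconj (X (Sum.inr i)) = X (Sum.inl i) := by simp [cconj]

theorem cconj_cconj (p : MvPolynomial (Fin n ⊕ Fin n) ℂ) : cconj (cconj p) = p := by
  induction p using MvPolynomial.induction_on with
  | C a => simp [cconj_C]
  | add p q hp hq => simp [cconj_add, hp, hq]
  | mul_X p i hp => rcases i with i | i <;> simp [cconj_mul, cconj_X_inl, cconj_X_inr, hp]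

/-- The quadratic module is stable under multiplication by Hermitian squares. -/
theorem mul_mem_QMfull {S : Set (MvPolynomial (Fin n ⊕ Fin n) ℂ)}
    {q : MvPolynomial (Fin n ⊕ Fin n) ℂ} (hq : q ∈ QMfull S)
    (r : MvPolynomial (Fin n ⊕ Fin n) ℂ) : q * (r * cconj r) ∈ QMfull S := by
  obtain ⟨N, c, g, p, hc, hg, rfl⟩ := hq
  refine ⟨N, c, g, fun s => p s * r, hc, hg, ?_⟩
  rw [Finset.sum_mul]
  refine Finset.sum_congr rfl fun s _ => ?_
  rw [cconj_mul]
  ring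

theorem generator_mem_QMfull {S : Set (MvPolynomial (Fin n ⊕ Fin n) ℂ)}
    {g : MvPolynomial (Fin n ⊕ Fin n) ℂ} (hg : g ∈ S ∪ {1})
    (r : MvPolynomial (Fin n ⊕ Fin n) ℂ) : g * (r * cconj r) ∈ QMfull S :=
  ⟨1, fun _ => 1, fun _ => g, fun _ => r, fun _ => zero_le_one, fun _ => hg, by simp⟩
end conj

/-! ### Measures from commutative C⋆-algebras -/

/-- A positive linear functional on a commutative unital C⋆-algebra is integration of the Gelfand
transform against a finite measure on the character space. -/
theorem exists_measure_characterSpace {A : Type*} [CommCStarAlgebra A] (φ : A →ₗ[ℂ] ℂ)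
    (hφ : ∀ a, 0 ≤ φ (star a * a))
    [MeasurableSpace (WeakDual.characterSpace ℂ A)] [BorelSpace (WeakDual.characterSpace ℂ A)] :
    ∃ ν : Measure (WeakDual.characterSpace ℂ A), IsFiniteMeasure ν ∧
      ∀ a : A, φ a = ∫ χ, χ a ∂ν := by
  let G := gelfandStarTransform A
  have hnn : ∀ f : C(WeakDual.characterSpace ℂ A, ℝ), (∀ x, 0 ≤ f x) →
      0 ≤ φ (G.symm ⟨fun x => (f x : ℂ), by fun_prop⟩) := by
    intro f hf
    -- a nonnegative function is `h̄ h` with `h` its square root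
    let h : C(WeakDual.characterSpace ℂ A, ℂ) :=
      ⟨fun x => ((Real.sqrt (f x) : ℝ) : ℂ), by fun_prop⟩
    have : (⟨fun x => (f x : ℂ), by fun_prop⟩ : C(WeakDual.characterSpace ℂ A, ℂ))
        = star h * h := by
      ext x
      simp [h, ← Complex.ofReal_mul, Real.mul_self_sqrt (hf x)]
    rw [this, map_mul, map_star]
    exact hφ _
  let Φ : C(WeakDual.characterSpace ℂ A, ℝ) →ₗ[ℝ] ℝ :=
    { toFun := fun f => (φ (G.symm ⟨fun x => (f x : ℂ), by fun_prop⟩)).re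
      map_add' := fun f g => by
        rw [← Complex.add_re, ← map_add, ← map_add]
        congr 3
        ext x
        simp
      map_smul' := fun c f => by
        rw [RingHom.id_apply, smul_eq_mul, ← Complex.re_ofReal_mul, ← smul_eq_mul, ← map_smul,
          ← map_smul]
        congr 3
        ext x
        simp }
  let Λ : CompactlySupportedContinuousMap (WeakDual.characterSpace ℂ A) ℝ →ₚ[ℝ] ℝ :=
    PositiveLinearMap.mk₀
      { toFun := fun f => Φ f.toContinuousMap
        map_add' := fun f g => Φ.map_add _ _
        map_smul' := fun c f => Φ.map_smul _ _ }
      fun f hf => (Complex.nonneg_iff.1 (hnn f.toContinuousMap hf)).1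
  have key : ∀ f : C(WeakDual.characterSpace ℂ A, ℝ),
      ∫ x, f x ∂(RealRMK.rieszMeasure Λ) = Φ f := fun f =>
    RealRMK.integral_rieszMeasure Λ (CompactlySupportedContinuousMap.continuousMapEquiv f)
  have hreal : ∀ f : C(WeakDual.characterSpace ℂ A, ℝ),
      φ (G.symm ⟨fun x => (f x : ℂ), by fun_prop⟩) = (Φ f : ℂ) := by
    intro f
    -- `f = f⁺ - f⁻`, and `φ` is real on both parts
    apply Complex.ext
    · rfl
    · have h1 := hnn (f ⊔ 0) (fun x => by simp)
      have h2 := hnn (-f ⊔ 0) (fun x => by simp)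
      have h3 : (⟨fun x => (f x : ℂ), by fun_prop⟩ : C(WeakDual.characterSpace ℂ A, ℂ))
          = ⟨fun x => ((f ⊔ 0) x : ℂ), by fun_prop⟩ - ⟨fun x => ((-f ⊔ 0) x : ℂ), by fun_prop⟩ := by
        ext x
        have : f x = (f x ⊔ 0) - (-f x ⊔ 0) := by
          rcases le_total 0 (f x) with h | h
          · simp [h]
          · simp [h]
        simp only [ContinuousMap.coe_mk, ContinuousMap.sub_apply, ContinuousMap.sup_apply,
          ContinuousMap.neg_apply, ContinuousMap.zero_apply]
        exact_mod_cast this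
      rw [h3, map_sub, map_sub, Complex.sub_im, ← (Complex.nonneg_iff.1 h1).2,
        ← (Complex.nonneg_iff.1 h2).2]
      simp
  refine ⟨RealRMK.rieszMeasure Λ, inferInstance, fun a => ?_⟩
  let fr : C(WeakDual.characterSpace ℂ A, ℝ) := ⟨fun x => (G a x).re, by fun_prop⟩
  let fi : C(WeakDual.characterSpace ℂ A, ℝ) := ⟨fun x => (G a x).im, by fun_prop⟩
  have ha : a = G.symm ⟨fun x => (fr x : ℂ), by fun_prop⟩
      + Complex.I • G.symm ⟨fun x => (fi x : ℂ), by fun_prop⟩ := by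
    rw [← map_smul, ← map_add, StarAlgEquiv.eq_symm_apply]
    ext x
    simp [fr, fi, mul_comm Complex.I, Complex.re_add_im]
  have hint : Integrable (fun x => G a x) (RealRMK.rieszMeasure Λ) :=
    (BoundedContinuousFunction.mkOfCompact (G a)).integrable _
  calc φ a = (Φ fr : ℂ) + Complex.I * (Φ fi : ℂ) := by
        conv_lhs => rw [ha]
        rw [map_add, map_smul, hreal, hreal, smul_eq_mul]
    _ = ∫ x, G a x ∂(RealRMK.rieszMeasure Λ) := by
        rw [← integral_re_add_im hint, ← key fr, ← key fi]
        simp [fr, fi, mul_comm]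
    _ = ∫ χ, χ a ∂(RealRMK.rieszMeasure Λ) := rfl

/-- A positive functional composed with a `*`-representation `π` of `ℂ[x,x̄]` is given by a measure
supported in the set of points `u` with `p(u)` in the spectrum of `π p` for all `p`. -/
theorem exists_measure_of_rep {n : ℕ} {B : Type*} [CStarAlgebra B]
    (π : MvPolynomial (Fin n ⊕ Fin n) ℂ →ₐ[ℂ] B) (hπ : ∀ p, π (cconj p) = star (π p))
    (φ : B →ₗ[ℂ] ℂ) (hφ : ∀ b, 0 ≤ φ (star b * b)) :
    ∃ μ : Measure (Fin n → ℂ), IsFiniteMeasure μ ∧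
      μ {u | ¬ ∀ p, cEval u p ∈ spectrum ℂ (π p)} = 0 ∧
      ∀ p, φ (π p) = ∫ u, cEval u p ∂μ := by
  let A₀ : StarSubalgebra ℂ B :=
    { π.range with
      star_mem' := by
        rintro _ ⟨p, rfl⟩
        exact ⟨cconj p, hπ p⟩ }
  let A := A₀.topologicalClosure
  have hcl : IsClosed (A : Set B) := A₀.isClosed_topologicalClosure
  have hcomm : ∀ x y : A₀, x * y = y * x := by
    rintro ⟨_, p, rfl⟩ ⟨_, q, rfl⟩
    ext
    change π p * π q = π q * π p
    rw [← map_mul, mul_comm, map_mul]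
  let _ : CommCStarAlgebra A :=
    { (inferInstance : CStarAlgebra A) with
      mul_comm := (A₀.commRingTopologicalClosure hcomm).mul_comm }
  let _ : MeasurableSpace (WeakDual.characterSpace ℂ A) := borel _
  have _ : BorelSpace (WeakDual.characterSpace ℂ A) := ⟨rfl⟩
  have hmem : ∀ p, π p ∈ A := fun p => A₀.le_topologicalClosure ⟨p, rfl⟩
  obtain ⟨ν, hν, hint⟩ := exists_measure_characterSpace (φ ∘ₗ A.subtype.toAlgHom.toLinearMap)
    (fun a => hφ a)
  let ρ : MvPolynomial (Fin n ⊕ Fin n) ℂ →ₐ[ℂ] A := π.codRestrict A.toSubalgebra hmem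
  -- the point of `ℂ^n` at which `χ ∘ π` evaluates
  let pt : WeakDual.characterSpace ℂ A → Fin n → ℂ := fun χ i => χ (ρ (X (Sum.inl i)))
  have hpt : Continuous pt := by
    refine continuous_pi fun i => ?_
    exact (gelfandStarTransform A (ρ (X (Sum.inl i)))).continuous
  have hev : ∀ χ p, cEval (pt χ) p = χ (ρ p) := by
    intro χ p
    have : (aeval (Sum.elim (pt χ) fun i => starRingEnd ℂ (pt χ i)) :
        MvPolynomial (Fin n ⊕ Fin n) ℂ →ₐ[ℂ] ℂ) = (χ : A →ₐ[ℂ] ℂ).comp ρ := by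
      ext i
      rcases i with i | i
      · simp [pt]
      · have h1 : ρ (X (Sum.inr i)) = star (ρ (X (Sum.inl i))) := by
          ext
          change π _ = star (π _)
          rw [← hπ]
          simp [cconj]
        have h2 : χ (star (ρ (X (Sum.inl i)))) = star (χ (ρ (X (Sum.inl i)))) :=
          map_star χ _
        simp [pt, h1, h2]
    have h := DFunLike.congr_fun this p
    simpa [cEval, aeval_eq_eval] using h
  have hcEval : ∀ p, Continuous fun u : Fin n → ℂ => cEval u p := by
    intro p
    unfold cEval
    refine (MvPolynomial.continuous_eval p).comp ?_
    refine continuous_pi fun i => ?_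
    rcases i with i | i
    · exact continuous_apply i
    · exact Complex.continuous_conj.comp (continuous_apply i)
  refine ⟨ν.map pt, inferInstance, ?_, fun p => ?_⟩
  · have hc : IsClosed {u : Fin n → ℂ | ∀ p, cEval u p ∈ spectrum ℂ (π p)} := by
      simp only [Set.ofPred_forall]
      exact isClosed_iInter fun p => (spectrum.isClosed (π p)).preimage (hcEval p)
    have hm : MeasurableSet {u : Fin n → ℂ | ¬ ∀ p, cEval u p ∈ spectrum ℂ (π p)} :=
      hc.measurableSet.compl
    rw [Measure.map_apply hpt.measurable hm]
    convert measure_empty (μ := ν)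
    ext χ
    simp only [Set.mem_preimage, Set.mem_ofPred_eq, Set.mem_empty_iff_false, iff_false, not_not]
    intro p
    -- spectral permanence transfers the spectrum in `A` to the spectrum in `B`
    rw [hev, ← show ((ρ p : A) : B) = π p from rfl, ← StarSubalgebra.mem_spectrum_iff (hS := hcl)]
    exact WeakDual.CharacterSpace.apply_mem_spectrum χ (ρ p)
  · rw [integral_map hpt.aemeasurable (hcEval p).aestronglyMeasurable]
    simp only [hev]
    exact hint (ρ p)

/-! ### Representations on the completion of a pre-Hilbert space -/

/-- If the operators `m p` on a pre-Hilbert space are bounded and `m p̄` is a formal adjoint of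
`m p`, then `m` extends to a `*`-representation on the completion. -/
theorem exists_rep_completion {n : ℕ} {E : Type*} [SeminormedAddCommGroup E]
    [InnerProductSpace ℂ E] (m : MvPolynomial (Fin n ⊕ Fin n) ℂ →ₐ[ℂ] Module.End ℂ E)
    (hbd : ∀ p, ∃ K : ℝ, ∀ x, ‖m p x‖ ≤ K * ‖x‖)
    (hadj : ∀ p x y, ⟪m (cconj p) x, y⟫_ℂ = ⟪x, m p y⟫_ℂ) :
    ∃ π : MvPolynomial (Fin n ⊕ Fin n) ℂ →ₐ[ℂ]
        (UniformSpace.Completion E →L[ℂ] UniformSpace.Completion E),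
      (∀ p, π (cconj p) = star (π p)) ∧
      ∀ p (x : E), π p (x : UniformSpace.Completion E) = (m p x : E) := by
  let T : MvPolynomial (Fin n ⊕ Fin n) ℂ →
      (UniformSpace.Completion E →L[ℂ] UniformSpace.Completion E) :=
    fun p => ((m p).mkContinuousOfExistsBound (hbd p)).completion
  have hT : ∀ p (x : E), T p (x : UniformSpace.Completion E) = (m p x : E) := fun p x => by
    simp [T, ContinuousLinearMap.completion_apply_coe]
  have hext : ∀ U V : UniformSpace.Completion E →L[ℂ] UniformSpace.Completion E,
      (∀ x : E, U x = V x) → U = V := by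
    intro U V h
    ext x
    induction x using UniformSpace.Completion.induction_on with
    | hp => exact isClosed_eq U.continuous V.continuous
    | ih x => exact h x
  refine ⟨AlgHom.ofLinearMap
    { toFun := T
      map_add' := fun p q => hext _ _ fun x => by
        simp [hT, UniformSpace.Completion.coe_add]
      map_smul' := fun c p => hext _ _ fun x => by
        simp [hT, UniformSpace.Completion.coe_smul] }
    (hext _ _ fun x => by simp [hT])
    (fun p q => hext _ _ fun x => by simp [hT]), ?_, hT⟩
  intro p
  refine (ContinuousLinearMap.eq_adjoint_iff (T (cconj p)) (T p)).mpr fun x y => ?_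
  induction x, y using UniformSpace.Completion.induction_on₂ with
  | hp => apply isClosed_eq <;> fun_prop
  | ih x y => rw [hT, hT, UniformSpace.Completion.inner_coe, UniformSpace.Completion.inner_coe, hadj]

/-- An operator whose quadratic form is nonnegative on the dense image of `E` has nonnegative
spectrum. -/
theorem nonneg_of_mem_spectrum {E : Type*} [SeminormedAddCommGroup E] [InnerProductSpace ℂ E]
    (T : UniformSpace.Completion E →L[ℂ] UniformSpace.Completion E)
    (hT : ∀ x : E, 0 ≤ ⟪T x, (x : UniformSpace.Completion E)⟫_ℂ) {z : ℂ}
    (hz : z ∈ spectrum ℂ T) : 0 ≤ z := by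
  have hpos : T.IsPositive := by
    rw [ContinuousLinearMap.isPositive_iff_complex]
    intro x
    have : 0 ≤ ⟪T x, x⟫_ℂ := by
      induction x using UniformSpace.Completion.induction_on with
      | hp => exact isClosed_Ici.preimage (f := fun x => ⟪T x, x⟫_ℂ) (by fun_prop)
      | ih x => exact hT x
    rw [Complex.nonneg_iff] at this
    exact ⟨Complex.ext (by simp) (by simpa using this.2), this.1⟩
  have h0 := (ContinuousLinearMap.nonneg_iff_isPositive T).2 hpos
  have hre := hpos.isSelfAdjoint.mem_spectrum_eq_re hz
  rw [hre] at hz ⊢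
  have : z.re ∈ spectrum ℝ T := by
    rwa [← spectrum.algebraMap_mem_iff ℂ]
  exact_mod_cast spectrum_nonneg_of_nonneg h0 this

/-- Spectral measure of a bounded `*`-representation on a pre-Hilbert space at a vector `e`: it
represents `p ↦ ⟪e, m p e⟫` and lives where every `g` acting positively is nonnegative.
Keeping the space `E` abstract separates the topology induced by `L` from the topology which
Mathlib puts on polynomials. -/
theorem exists_measure_of_mul_operators {n : ℕ} {E : Type*} [SeminormedAddCommGroup E]
    [InnerProductSpace ℂ E] (m : MvPolynomial (Fin n ⊕ Fin n) ℂ →ₐ[ℂ] Module.End ℂ E)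
    (hbd : ∀ p, ∃ K : ℝ, ∀ x, ‖m p x‖ ≤ K * ‖x‖)
    (hadj : ∀ p x y, ⟪m (cconj p) x, y⟫_ℂ = ⟪x, m p y⟫_ℂ) (e : E) :
    ∃ μ : Measure (Fin n → ℂ), IsFiniteMeasure μ ∧
      μ {u | ¬ ∀ g, (∀ x, 0 ≤ ⟪m g x, x⟫_ℂ) → 0 ≤ cEval u g} = 0 ∧
      ∀ p, ⟪e, m p e⟫_ℂ = ∫ u, cEval u p ∂μ := by
  obtain ⟨π, hstar, hπ⟩ := exists_rep_completion m hbd hadj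
  let ξ : UniformSpace.Completion E := e
  let φ : (UniformSpace.Completion E →L[ℂ] UniformSpace.Completion E) →ₗ[ℂ] ℂ :=
    { toFun := fun T => ⟪ξ, T ξ⟫_ℂ
      map_add' := fun T U => by simp [inner_add_right]
      map_smul' := fun c T => by simp [inner_smul_right] }
  obtain ⟨μ, hμ, hspec, hint⟩ := exists_measure_of_rep π hstar φ (fun T => by
    change 0 ≤ ⟪ξ, ContinuousLinearMap.adjoint T (T ξ)⟫_ℂ
    rw [ContinuousLinearMap.adjoint_inner_right]
    exact Complex.nonneg_iff.2
      ⟨inner_self_nonneg (𝕜 := ℂ) (x := T ξ), (inner_self_im (𝕜 := ℂ) (T ξ)).symm⟩)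
  refine ⟨μ, hμ, measure_mono_null ?_ hspec, fun p => ?_⟩
  · refine fun u hu h => hu fun g hg => ?_
    refine nonneg_of_mem_spectrum (π g) (fun x => ?_) (h g)
    rw [hπ, UniformSpace.Completion.inner_coe]
    exact hg x
  · rw [← hint p]
    change _ = ⟪ξ, π p ξ⟫_ℂ
    rw [hπ, UniformSpace.Completion.inner_coe]

/-! ### The representation attached to `L` -/

/-- The Archimedean condition bounds multiplication by each variable in the seminorm
`q ↦ √L(q q̄)`. -/
theorem exists_mul_bound {n : ℕ} (S : Set (MvPolynomial (Fin n ⊕ Fin n) ℂ)) {R : ℝ}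
    (hArch : ((C (R : ℂ) : MvPolynomial (Fin n ⊕ Fin n) ℂ)
        - ∑ i : Fin n, X (Sum.inl i) * X (Sum.inr i)) ∈ QMfull S)
    (L : MvPolynomial (Fin n ⊕ Fin n) ℂ →ₗ[ℂ] ℂ)
    (hpos : ∀ q ∈ QMfull S, 0 ≤ L q) (i : Fin n) (q : MvPolynomial (Fin n ⊕ Fin n) ℂ) :
    (L (X (Sum.inl i) * X (Sum.inr i) * (q * cconj q))).re ≤ R * (L (q * cconj q)).re := by
  have h1 := (Complex.nonneg_iff.1 (hpos _ (mul_mem_QMfull hArch q))).1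
  rw [sub_mul, ← smul_eq_C_mul, map_sub, map_smul, Finset.sum_mul, map_sum, smul_eq_mul,
    Complex.sub_re, Complex.re_ofReal_mul, Complex.re_sum] at h1
  have h2 : ∀ j, 0 ≤ (L (X (Sum.inl j) * X (Sum.inr j) * (q * cconj q))).re := by
    intro j
    have h := hpos _ (generator_mem_QMfull (S := S) (Or.inr rfl) (X (Sum.inl j) * q))
    rw [cconj_mul, cconj_X_inl] at h
    rw [show X (Sum.inl j) * X (Sum.inr j) * (q * cconj q)
      = 1 * (X (Sum.inl j) * q * (X (Sum.inr j) * cconj q)) by ring]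
    exact (Complex.nonneg_iff.1 h).1
  -- the sum over all `j` dominates its `i`-th term
  have h3 := Finset.single_le_sum (fun j _ => h2 j) (Finset.mem_univ i)
  linarith

/-- complex Putinar: if `𝓜(S)` is Archimedean and the Hermitian
linear functional `L` is nonnegative on `𝓜(S)`, then `L` has a finite
representing measure supported on the positivity domain `𝒟(S)`. -/
theorem stmt3 {n : ℕ} (S : Set (MvPolynomial (Fin n ⊕ Fin n) ℂ))
    (hS : ∀ g ∈ S, cconj g = g)
    (hArch : ∃ R : ℝ, 0 < R ∧
      ((C (R : ℂ) : MvPolynomial (Fin n ⊕ Fin n) ℂ)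
        - ∑ i : Fin n, X (Sum.inl i) * X (Sum.inr i)) ∈ QMfull S)
    (L : MvPolynomial (Fin n ⊕ Fin n) ℂ →ₗ[ℂ] ℂ)
    (hherm : ∀ p, L (cconj p) = star (L p))
    (hpos : ∀ q ∈ QMfull S, 0 ≤ L q) :
    ∃ μ : Measure (Fin n → ℂ), IsFiniteMeasure μ ∧
      μ {u : Fin n → ℂ | ¬ (∀ g ∈ S, 0 ≤ cEval u g)} = 0 ∧
      ∀ p : MvPolynomial (Fin n ⊕ Fin n) ℂ, L p = ∫ u, cEval u p ∂μ := by
  obtain ⟨R, hR, hRS⟩ := hArch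
  have hgen : ∀ g ∈ S ∪ {1}, ∀ p, 0 ≤ L (g * (p * cconj p)) := fun g hg p =>
    hpos _ (generator_mem_QMfull hg p)
  let core : PreInnerProductSpace.Core ℂ (MvPolynomial (Fin n ⊕ Fin n) ℂ) :=
    { inner := fun p q => L (cconj p * q)
      conj_inner_symm := fun p q => by
        rw [← Complex.star_def, ← hherm, cconj_mul, cconj_cconj, mul_comm]
      re_inner_nonneg := fun p => by
        have := hgen 1 (Or.inr rfl) p
        rw [one_mul, mul_comm] at this
        exact (Complex.nonneg_iff.1 this).1
      add_left := fun p q r => by rw [cconj_add, add_mul, map_add]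
      smul_left := fun p q a => by rw [cconj_smul, smul_mul_assoc, map_smul, smul_eq_mul] }
  let _ : SeminormedAddCommGroup (MvPolynomial (Fin n ⊕ Fin n) ℂ) :=
    InnerProductSpace.Core.toSeminormedAddCommGroup (c := core)
  let _ : InnerProductSpace ℂ (MvPolynomial (Fin n ⊕ Fin n) ℂ) :=
    InnerProductSpace.ofCore core
  have hinner : ∀ p q : MvPolynomial (Fin n ⊕ Fin n) ℂ, ⟪p, q⟫_ℂ = L (cconj p * q) :=
    fun p q => rfl
  have hnorm : ∀ p : MvPolynomial (Fin n ⊕ Fin n) ℂ, ‖p‖ ^ 2 = (L (p * cconj p)).re := by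
    intro p
    rw [@norm_sq_eq_re_inner ℂ, hinner, mul_comm]
    rfl
  let m : MvPolynomial (Fin n ⊕ Fin n) ℂ →ₐ[ℂ] Module.End ℂ (MvPolynomial (Fin n ⊕ Fin n) ℂ) :=
    Algebra.lmul ℂ _
  have hm : ∀ p q, m p q = p * q := fun p q => rfl
  have hX : ∀ (k : Fin n ⊕ Fin n) (q : MvPolynomial (Fin n ⊕ Fin n) ℂ),
      ‖X k * q‖ ≤ √R * ‖q‖ := by
    intro k q
    have hk : ∃ i, X k * cconj (X k) =
        (X (Sum.inl i) * X (Sum.inr i) : MvPolynomial (Fin n ⊕ Fin n) ℂ) := by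
      rcases k with i | i
      · exact ⟨i, by rw [cconj_X_inl]⟩
      · exact ⟨i, by rw [cconj_X_inr, mul_comm]⟩
    obtain ⟨i, hi⟩ := hk
    refine le_of_sq_le_sq ?_ (by positivity)
    rw [mul_pow, Real.sq_sqrt hR.le, hnorm, hnorm, cconj_mul, mul_mul_mul_comm, hi]
    exact exists_mul_bound S hRS L hpos i q
  have hbd : ∀ p, ∃ K : ℝ, ∀ q, ‖m p q‖ ≤ K * ‖q‖ := by
    intro p
    simp only [hm]
    induction p using MvPolynomial.induction_on with
    | C a => exact ⟨‖a‖, fun q => by rw [← smul_eq_C_mul, norm_smul]⟩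
    | add p₁ p₂ h₁ h₂ =>
      obtain ⟨K₁, h₁⟩ := h₁
      obtain ⟨K₂, h₂⟩ := h₂
      refine ⟨K₁ + K₂, fun q => ?_⟩
      rw [add_mul, add_mul]
      exact (norm_add_le _ _).trans (add_le_add (h₁ q) (h₂ q))
    | mul_X p k h =>
      obtain ⟨K, h⟩ := h
      refine ⟨√R * K, fun q => ?_⟩
      rw [mul_comm p, mul_assoc, mul_assoc]
      exact (hX k _).trans (mul_le_mul_of_nonneg_left (h q) (Real.sqrt_nonneg R))
  have hadj : ∀ p x y, ⟪m (cconj p) x, y⟫_ℂ = ⟪x, m p y⟫_ℂ := by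
    intro p x y
    rw [hinner, hinner, hm, hm, cconj_mul, cconj_cconj]
    congr 1
    ring
  obtain ⟨μ, hμ, hsupp, hint⟩ := exists_measure_of_mul_operators m hbd hadj 1
  refine ⟨μ, hμ, measure_mono_null ?_ hsupp, fun p => ?_⟩
  · refine fun u hu h => hu fun g hg => ?_
    refine h g fun x => ?_
    rw [hinner, hm, cconj_mul, hS g hg, mul_assoc, mul_comm (cconj x)]
    exact hgen g (Or.inl hg) x
  · rw [← hint p, hinner, hm, mul_one, ← C_1, cconj_C, map_one, C_1, one_mul]
end

section
/- Let ρ ∈ SEP_d. Then for every integer t ≥ 2 and also for t = ∞, the infimum defining ξ_t^sep(ρ) is attained, i.e., there exists a linear functional L feasible for the order-t program with L(1) = ξ_t^sep(ρ). Moreover, lim_{t→∞} ξ_t^sep(ρ) = ξ_∞^sep(ρ). -/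
/-!
A functional is identified with its family of moments `m ↦ L(m)` in the product space
`(SVar d →₀ ℕ) → ℂ`, where each evaluation `L ↦ L(p)` is continuous, so every feasible set is
closed (`isClosed_isFeas`).

The localizing constraints give `L(w w̄) ≤ R ^ deg w · L(1)` for monomials `w` of degree at most
`t` (`IsFeas.diag_le`). Positivity on squares then bounds every moment of degree at most `2t` by
`R ^ deg · L(1)` (`IsFeas.mom_le`), a bound that does not depend on `t`. The constraints only see
degrees up to `2t`, so moments of larger degree may be replaced by zero (`isFeas_trunc`). By
Tychonoff, minimization takes place on a compact set, and the optimum is attained as soon as some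
functional is feasible (`exists_attained`).

A separable `ρ` is a sum `∑ u_l u_l* ⊗ v_l v_l*` in which each pair `(u_l, v_l)` can be rescaled so
that `max |u_l|² = max |v_l|² ≤ √ρ_max` (`exists_balanced`). The sum of the evaluations at the
points `(u_l, v_l)` is then feasible for the order `∞` (`exists_isFeasInf`).

Finally `ξ_t` is nondecreasing and at most `ξ_∞`. The order-`t` feasible points of the box with
value at most `sup_t ξ_t` form nested nonempty compact sets; a common point is feasible for the
order `∞` (`exists_limit`), which gives both `ξ_∞ = sup_t ξ_t` and attainment at `∞`.
-/

open MvPolynomial ComplexOrder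
open scoped ENNReal

/-- Variables of `ℂ[x,x̄,y,ȳ]` for the bipartite setting: `x_i, x̄_i, y_j, ȳ_j`. -/
abbrev SVar (d : ℕ) := (Fin d ⊕ Fin d) ⊕ (Fin d ⊕ Fin d)

/-- The polynomial ring `ℂ[x,x̄,y,ȳ]`. -/
abbrev SPoly (d : ℕ) := MvPolynomial (SVar d) ℂ

def xv {d : ℕ} (i : Fin d) : SVar d := Sum.inl (Sum.inl i)
def xbv {d : ℕ} (i : Fin d) : SVar d := Sum.inl (Sum.inr i)
def yv {d : ℕ} (j : Fin d) : SVar d := Sum.inr (Sum.inl j)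
def ybv {d : ℕ} (j : Fin d) : SVar d := Sum.inr (Sum.inr j)

/-- The conjugate polynomial: conjugate the coefficients and exchange each
variable with its barred version. -/
noncomputable def sconj {d : ℕ} (p : SPoly d) : SPoly d :=
  rename (Sum.map (Sum.elim Sum.inr Sum.inl) (Sum.elim Sum.inr Sum.inl))
    (map (starRingEnd ℂ) p)

/-- The matrix `xx* ⊗ yy*`, with rows and columns indexed by pairs `(i,j)`. -/
noncomputable def pureState (d : ℕ) (x y : Fin d → ℂ) :
    Matrix (Fin d × Fin d) (Fin d × Fin d) ℂ :=
  Matrix.of fun p q => x p.1 * starRingEnd ℂ (x q.1) * (y p.2 * starRingEnd ℂ (y q.2))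

/-- The cone of (unnormalized) separable states. -/
def SEP (d : ℕ) : Set (Matrix (Fin d × Fin d) (Fin d × Fin d) ℂ) :=
  { ρ | ∃ (r : ℕ) (c : Fin r → ℝ) (x y : Fin r → (Fin d → ℂ)),
      (∀ ℓ, 0 ≤ c ℓ) ∧ (∀ ℓ, ∑ i, Complex.normSq (x ℓ i) = 1) ∧
      (∀ ℓ, ∑ i, Complex.normSq (y ℓ i) = 1) ∧
      ρ = ∑ ℓ, (c ℓ : ℂ) • pureState d (x ℓ) (y ℓ) }

/-- Largest diagonal entry `ρ_max` of `ρ`. -/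
noncomputable def rhoMax (d : ℕ) (ρ : Matrix (Fin d × Fin d) (Fin d × Fin d) ℂ) : ℝ :=
  ⨆ p : Fin d × Fin d, (ρ p p).re

/-- The degree-four monomial `x_i x̄_{i'} y_j ȳ_{j'}`. -/
noncomputable def momPoly {d : ℕ} (i i' j j' : Fin d) : SPoly d :=
  X (xv i) * X (xbv i') * X (yv j) * X (ybv j')

/-- The localizing polynomials `S_ρ`. -/
noncomputable def Sloc (d : ℕ) (ρ : Matrix (Fin d × Fin d) (Fin d × Fin d) ℂ) :
    Set (SPoly d) :=
  (Set.range fun i : Fin d =>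
    (C ((Real.sqrt (rhoMax d ρ) : ℂ)) : SPoly d) - X (xv i) * X (xbv i)) ∪
  (Set.range fun j : Fin d =>
    (C ((Real.sqrt (rhoMax d ρ) : ℂ)) : SPoly d) - X (yv j) * X (ybv j))

/-- The truncated quadratic module `𝓜(S)_{2t}`. -/
def QMt (d : ℕ) (S : Set (SPoly d)) (t : ℕ) : Set (SPoly d) :=
  { q | ∃ (N : ℕ) (c : Fin N → ℝ) (g p : Fin N → SPoly d),
      (∀ s, 0 ≤ c s) ∧ (∀ s, g s ∈ S ∪ {1}) ∧
      (∀ s, (g s * (p s * sconj (p s))).totalDegree ≤ 2 * t) ∧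
      q = ∑ s, C (c s : ℂ) * (g s * (p s * sconj (p s))) }

/-- The (untruncated) quadratic module `𝓜(S)`. -/
def QMf (d : ℕ) (S : Set (SPoly d)) : Set (SPoly d) :=
  { q | ∃ (N : ℕ) (c : Fin N → ℝ) (g p : Fin N → SPoly d),
      (∀ s, 0 ≤ c s) ∧ (∀ s, g s ∈ S ∪ {1}) ∧
      q = ∑ s, C (c s : ℂ) * (g s * (p s * sconj (p s))) }

/-- Feasibility for the order-`t` program defining `ξ_t^sep(ρ)`. -/
def IsFeas (d t : ℕ) (ρ : Matrix (Fin d × Fin d) (Fin d × Fin d) ℂ)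
    (L : SPoly d →ₗ[ℂ] ℂ) : Prop :=
  (∀ p, L (sconj p) = star (L p)) ∧
  (∀ i i' j j', L (momPoly i i' j j') = ρ (i, j) (i', j')) ∧
  (∀ q ∈ QMt d (Sloc d ρ) t, 0 ≤ L q) ∧
  (∀ q : Fin d → Fin d → SPoly d, (∀ i j, (q i j).totalDegree ≤ t - 2) →
    0 ≤ ∑ i, ∑ j, ∑ i', ∑ j',
      L ((C (ρ (i, j) (i', j')) - momPoly i i' j j') * (q i j * sconj (q i' j'))))

/-- Feasibility for the order-`∞` program. -/
def IsFeasInf (d : ℕ) (ρ : Matrix (Fin d × Fin d) (Fin d × Fin d) ℂ)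
    (L : SPoly d →ₗ[ℂ] ℂ) : Prop :=
  (∀ p, L (sconj p) = star (L p)) ∧
  (∀ i i' j j', L (momPoly i i' j j') = ρ (i, j) (i', j')) ∧
  (∀ q ∈ QMf d (Sloc d ρ), 0 ≤ L q) ∧
  (∀ q : Fin d → Fin d → SPoly d,
    0 ≤ ∑ i, ∑ j, ∑ i', ∑ j',
      L ((C (ρ (i, j) (i', j')) - momPoly i i' j j') * (q i j * sconj (q i' j'))))

/-- `ξ_t^sep(ρ)`. -/
noncomputable def xiSep (d t : ℕ) (ρ : Matrix (Fin d × Fin d) (Fin d × Fin d) ℂ) : ℝ≥0∞ :=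
  sInf { e | ∃ L : SPoly d →ₗ[ℂ] ℂ, IsFeas d t ρ L ∧ e = ENNReal.ofReal (L 1).re }

/-- `ξ_∞^sep(ρ)`. -/
noncomputable def xiSepInf (d : ℕ) (ρ : Matrix (Fin d × Fin d) (Fin d × Fin d) ℂ) : ℝ≥0∞ :=
  sInf { e | ∃ L : SPoly d →ₗ[ℂ] ℂ, IsFeasInf d ρ L ∧ e = ENNReal.ofReal (L 1).re }


/-! ### The conjugation on polynomials -/

theorem sconj_eq {d : ℕ} (p : SPoly d) : sconj p =
    ((rename (R := ℂ) (Sum.map (Sum.elim Sum.inr Sum.inl) (Sum.elim Sum.inr Sum.inl)) :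
      SPoly d →ₐ[ℂ] SPoly d) : SPoly d →+* SPoly d).comp (map (starRingEnd ℂ)) p := rfl

theorem sconj_add {d : ℕ} (p q : SPoly d) : sconj (p + q) = sconj p + sconj q := by
  simp only [sconj_eq, map_add]

theorem sconj_mul {d : ℕ} (p q : SPoly d) : sconj (p * q) = sconj p * sconj q := by
  simp only [sconj_eq, map_mul]

theorem sconj_C {d : ℕ} (a : ℂ) : sconj (C a : SPoly d) = C (star a) := by
  simp [sconj]

theorem sconj_one {d : ℕ} : sconj (1 : SPoly d) = 1 := by
  simp [sconj]

/-- The involution of the variables that swaps each variable with its barred version. -/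
def vbar {d : ℕ} (s : SVar d) : SVar d :=
  Sum.map (Sum.elim Sum.inr Sum.inl) (Sum.elim Sum.inr Sum.inl) s

theorem vbar_vbar {d : ℕ} (s : SVar d) : vbar (vbar s) = s := by
  rcases s with (s | s) | (s | s) <;> rfl

theorem sconj_X {d : ℕ} (s : SVar d) : sconj (X s : SPoly d) = X (vbar s) := by
  simp [sconj, vbar]

theorem sconj_sconj {d : ℕ} (p : SPoly d) : sconj (sconj p) = p := by
  induction p using MvPolynomial.induction_on with
  | C a => simp [sconj_C]
  | add p q hp hq => rw [sconj_add, sconj_add, hp, hq]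
  | mul_X p s hp => rw [sconj_mul, sconj_mul, hp, sconj_X, sconj_X, vbar_vbar]

theorem totalDegree_sconj_le {d : ℕ} (p : SPoly d) :
    (sconj p).totalDegree ≤ p.totalDegree :=
  (totalDegree_rename_le _ _).trans
    (totalDegree_le_of_support_subset (support_map_subset _ _))

theorem totalDegree_sconj {d : ℕ} (p : SPoly d) :
    (sconj p).totalDegree = p.totalDegree :=
  le_antisymm (totalDegree_sconj_le p)
    (by simpa only [sconj_sconj] using totalDegree_sconj_le (sconj p))

theorem sconj_monomial {d : ℕ} (m : SVar d →₀ ℕ) :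
    sconj (monomial m 1 : SPoly d) = monomial (m.mapDomain vbar) 1 := by
  unfold sconj
  rw [map_monomial, map_one, rename_monomial]
  rfl

theorem momPoly_eq {d : ℕ} (i i' j j' : Fin d) : (momPoly i i' j j' : SPoly d) =
    X (xv i) * X (xbv i') * X (yv j) * X (ybv j') := rfl

theorem totalDegree_momPoly_le {d : ℕ} (i i' j j' : Fin d) :
    (momPoly i i' j j' : SPoly d).totalDegree ≤ 4 := by
  have h1 := totalDegree_mul (X (xv i) * X (xbv i') * X (yv j) : SPoly d) (X (ybv j'))
  have h2 := totalDegree_mul (X (xv i) * X (xbv i') : SPoly d) (X (yv j))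
  have h3 := totalDegree_mul (X (xv i) : SPoly d) (X (xbv i'))
  simp only [totalDegree_X] at h1 h2 h3
  rw [momPoly_eq]
  omega

/-! ### Functionals as families of moments -/

/-- The linear functional whose value at the monomial with exponent `m` is `f m`. -/
noncomputable def toL {d : ℕ} (f : (SVar d →₀ ℕ) → ℂ) : SPoly d →ₗ[ℂ] ℂ :=
  (basisMonomials (SVar d) ℂ).constr ℂ f

/-- The moments of a linear functional. -/
noncomputable def mom {d : ℕ} (L : SPoly d →ₗ[ℂ] ℂ) (m : SVar d →₀ ℕ) : ℂ :=
  L (monomial m 1)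

theorem toL_monomial {d : ℕ} (f : (SVar d →₀ ℕ) → ℂ) (m : SVar d →₀ ℕ) :
    toL f (monomial m 1) = f m := by
  have := (basisMonomials (SVar d) ℂ).constr_basis ℂ f m
  rwa [coe_basisMonomials] at this

theorem apply_eq_sum {d : ℕ} (L : SPoly d →ₗ[ℂ] ℂ) (p : SPoly d) :
    L p = ∑ m ∈ p.support, p.coeff m * mom L m := by
  conv_lhs => rw [p.as_sum]
  rw [map_sum]
  refine Finset.sum_congr rfl fun m _ => ?_
  rw [mom, ← smul_eq_mul, ← map_smul, smul_monomial, smul_eq_mul, mul_one]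

theorem continuous_toL {d : ℕ} (p : SPoly d) :
    Continuous fun f : (SVar d →₀ ℕ) → ℂ => toL f p := by
  have h : (fun f : (SVar d →₀ ℕ) → ℂ => toL f p) =
      fun f => ∑ m ∈ p.support, p.coeff m * f m := by
    funext f
    rw [apply_eq_sum]
    simp only [mom, toL_monomial]
  rw [h]
  fun_prop

/-- The moments of `L` in degree at most `2t`, extended by zero. -/
noncomputable def trunc {d : ℕ} (t : ℕ) (L : SPoly d →ₗ[ℂ] ℂ) (m : SVar d →₀ ℕ) : ℂ :=
  if m.degree ≤ 2 * t then mom L m else 0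

theorem degree_le_totalDegree {d : ℕ} {p : SPoly d} {m : SVar d →₀ ℕ} (h : m ∈ p.support) :
    m.degree ≤ p.totalDegree := le_totalDegree h

theorem totalDegree_monomial_one {d : ℕ} (m : SVar d →₀ ℕ) :
    (monomial m (1 : ℂ) : SPoly d).totalDegree = m.degree :=
  totalDegree_monomial m one_ne_zero

theorem toL_trunc {d t : ℕ} (L : SPoly d →ₗ[ℂ] ℂ) {p : SPoly d} (hp : p.totalDegree ≤ 2 * t) :
    toL (trunc t L) p = L p := by
  rw [apply_eq_sum, apply_eq_sum]
  refine Finset.sum_congr rfl fun m hm => ?_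
  rw [mom, toL_monomial, trunc, if_pos ((degree_le_totalDegree hm).trans hp)]

theorem toL_trunc_star {d t : ℕ} {L : SPoly d →ₗ[ℂ] ℂ} (hL : ∀ p, L (sconj p) = star (L p))
    (p : SPoly d) : toL (trunc t L) (sconj p) = star (toL (trunc t L) p) := by
  induction p using MvPolynomial.induction_on' with
  | monomial m a =>
    have ha : (monomial m a : SPoly d) = C a * monomial m 1 := by simp [C_mul_monomial]
    have key : toL (trunc t L) (sconj (monomial m 1)) = star (toL (trunc t L) (monomial m 1)) := by
      by_cases h : m.degree ≤ 2 * t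
      · rw [toL_trunc, toL_trunc, hL]
        · rwa [totalDegree_monomial_one]
        · rwa [totalDegree_sconj, totalDegree_monomial_one]
      · -- the conjugate of a monomial is a monomial of the same degree
        rw [sconj_monomial, toL_monomial, toL_monomial, trunc, trunc, if_neg h, if_neg, star_zero]
        rwa [Finsupp.degree_mapDomain]
    rw [ha, sconj_mul, sconj_C, ← smul_eq_C_mul, ← smul_eq_C_mul, map_smul, map_smul, key,
      smul_eq_mul, smul_eq_mul, star_mul']
  | add p q hp hq => rw [sconj_add, map_add, map_add, star_add, hp, hq]

/-! ### The feasibility conditions -/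

theorem isFeas_trunc {d t : ℕ} {ρ : Matrix (Fin d × Fin d) (Fin d × Fin d) ℂ} (ht : 2 ≤ t)
    {L : SPoly d →ₗ[ℂ] ℂ} (hL : IsFeas d t ρ L) : IsFeas d t ρ (toL (trunc t L)) := by
  obtain ⟨h1, h2, h3, h4⟩ := hL
  refine ⟨toL_trunc_star h1, fun i i' j j' => ?_, ?_, fun q hq => ?_⟩
  · rw [toL_trunc, h2]
    exact (totalDegree_momPoly_le ..).trans (by omega)
  · intro q hq
    have hd : q.totalDegree ≤ 2 * t := by
      obtain ⟨N, c, g, p, -, -, hdeg, rfl⟩ := hq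
      refine (totalDegree_finsetSum _ _).trans (Finset.sup_le fun s _ => ?_)
      refine (totalDegree_mul _ _).trans ?_
      rw [totalDegree_C, zero_add]
      exact hdeg s
    rw [toL_trunc L hd]
    exact h3 q hq
  · refine (h4 q hq).trans_eq ?_
    refine Finset.sum_congr rfl fun i _ => Finset.sum_congr rfl fun j _ =>
      Finset.sum_congr rfl fun i' _ => Finset.sum_congr rfl fun j' _ => ?_
    rw [toL_trunc]
    have e1 := totalDegree_mul (C (ρ (i, j) (i', j')) - momPoly i i' j j')
      (q i j * sconj (q i' j'))
    have e2 := totalDegree_mul (q i j) (sconj (q i' j'))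
    have e3 := totalDegree_sub (C (ρ (i, j) (i', j'))) (momPoly i i' j j')
    have e4 := totalDegree_momPoly_le i i' j j'
    rw [totalDegree_C, Nat.zero_max] at e3
    rw [totalDegree_sconj] at e2
    have := hq i j
    have := hq i' j'
    omega

theorem IsFeas.anti {d s t : ℕ} {ρ : Matrix (Fin d × Fin d) (Fin d × Fin d) ℂ} (hst : s ≤ t)
    {L : SPoly d →ₗ[ℂ] ℂ} (hL : IsFeas d t ρ L) : IsFeas d s ρ L := by
  obtain ⟨h1, h2, h3, h4⟩ := hL
  refine ⟨h1, h2, ?_, fun q hq => h4 q fun i j => (hq i j).trans (by omega)⟩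
  rintro q ⟨N, c, g, p, hc, hg, hd, rfl⟩
  exact h3 _ ⟨N, c, g, p, hc, hg, fun s => (hd s).trans (by omega), rfl⟩

theorem IsFeasInf.isFeas {d : ℕ} {ρ : Matrix (Fin d × Fin d) (Fin d × Fin d) ℂ}
    {L : SPoly d →ₗ[ℂ] ℂ} (hL : IsFeasInf d ρ L) (t : ℕ) : IsFeas d t ρ L := by
  obtain ⟨h1, h2, h3, h4⟩ := hL
  refine ⟨h1, h2, ?_, fun q _ => h4 q⟩
  rintro q ⟨N, c, g, p, hc, hg, -, rfl⟩
  exact h3 _ ⟨N, c, g, p, hc, hg, rfl⟩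

theorem isFeasInf_of_forall {d : ℕ} {ρ : Matrix (Fin d × Fin d) (Fin d × Fin d) ℂ}
    {L : SPoly d →ₗ[ℂ] ℂ} (hL : ∀ t, IsFeas d (t + 2) ρ L) : IsFeasInf d ρ L := by
  refine ⟨(hL 0).1, (hL 0).2.1, ?_, fun q => ?_⟩
  · rintro q ⟨N, c, g, p, hc, hg, rfl⟩
    let D := Finset.univ.sup fun s => (g s * (p s * sconj (p s))).totalDegree
    refine (hL D).2.2.1 _ ⟨N, c, g, p, hc, hg, fun s => ?_, rfl⟩
    have : (g s * (p s * sconj (p s))).totalDegree ≤ D :=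
      Finset.le_sup (f := fun s => (g s * (p s * sconj (p s))).totalDegree) (Finset.mem_univ s)
    omega
  · let D := Finset.univ.sup fun r : Fin d × Fin d => (q r.1 r.2).totalDegree
    refine (hL D).2.2.2 q fun i j => ?_
    have : (q i j).totalDegree ≤ D :=
      Finset.le_sup (f := fun r : Fin d × Fin d => (q r.1 r.2).totalDegree)
        (Finset.mem_univ (i, j))
    omega

theorem isClosed_isFeas {d : ℕ} (t : ℕ) (ρ : Matrix (Fin d × Fin d) (Fin d × Fin d) ℂ) :
    IsClosed {f : (SVar d →₀ ℕ) → ℂ | IsFeas d t ρ (toL f)} := by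
  have := Complex.orderClosedTopology
  have hc := continuous_toL (d := d)
  simp only [IsFeas, Set.ofPred_and, Set.ofPred_forall]
  refine IsClosed.inter ?_ (IsClosed.inter ?_ (IsClosed.inter ?_ ?_))
  · exact isClosed_iInter fun p => isClosed_eq (hc _) (hc _).star
  · exact isClosed_iInter fun i => isClosed_iInter fun i' => isClosed_iInter fun j =>
      isClosed_iInter fun j' => isClosed_eq (hc _) continuous_const
  · exact isClosed_iInter fun q => isClosed_iInter fun _ => isClosed_le continuous_const (hc _)
  · refine isClosed_iInter fun q => isClosed_iInter fun _ => isClosed_le continuous_const ?_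
    fun_prop

/-! ### A priori bounds on the moments -/

theorem IsFeas.loc_nonneg {d t : ℕ} {ρ : Matrix (Fin d × Fin d) (Fin d × Fin d) ℂ}
    {L : SPoly d →ₗ[ℂ] ℂ} (hL : IsFeas d t ρ L) {g : SPoly d} (hg : g ∈ Sloc d ρ ∪ {1})
    {p : SPoly d} (hd : (g * (p * sconj p)).totalDegree ≤ 2 * t) :
    0 ≤ L (g * (p * sconj p)) := by
  refine hL.2.2.1 _ ⟨1, fun _ => 1, fun _ => g, fun _ => p, fun _ => zero_le_one, fun _ => hg,
    fun _ => hd, ?_⟩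
  simp

theorem IsFeas.sq_nonneg {d t : ℕ} {ρ : Matrix (Fin d × Fin d) (Fin d × Fin d) ℂ}
    {L : SPoly d →ₗ[ℂ] ℂ} (hL : IsFeas d t ρ L)
    {p : SPoly d} (hd : p.totalDegree ≤ t) : 0 ≤ L (p * sconj p) := by
  have h := hL.loc_nonneg (g := 1) (p := p) (by simp) (by
    have := totalDegree_mul p (sconj p)
    rw [totalDegree_sconj] at this
    rw [one_mul]
    omega)
  rwa [one_mul] at h

theorem exists_loc {d : ℕ} (ρ : Matrix (Fin d × Fin d) (Fin d × Fin d) ℂ) (s : SVar d) :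
    C ((Real.sqrt (rhoMax d ρ) : ℝ) : ℂ) - X s * sconj (X s) ∈ Sloc d ρ := by
  rw [sconj_X]
  rcases s with (s | s) | (s | s)
  · exact Or.inl ⟨s, rfl⟩
  · rw [mul_comm (X _)]
    exact Or.inl ⟨s, rfl⟩
  · exact Or.inr ⟨s, rfl⟩
  · rw [mul_comm (X _)]
    exact Or.inr ⟨s, rfl⟩

/-- A bound, at least `1`, for `|x_i|²` and `|y_j|²` on the set cut out by `S_ρ`. -/
noncomputable def Rad (d : ℕ) (ρ : Matrix (Fin d × Fin d) (Fin d × Fin d) ℂ) : ℝ :=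
  max 1 (Real.sqrt (rhoMax d ρ))

theorem one_le_Rad {d : ℕ} (ρ : Matrix (Fin d × Fin d) (Fin d × Fin d) ℂ) : 1 ≤ Rad d ρ :=
  le_max_left _ _

/-- Each localizing constraint trades one variable of the monomial `w` for a factor `√ρ_max`. -/
theorem IsFeas.diag_le {d t : ℕ} {ρ : Matrix (Fin d × Fin d) (Fin d × Fin d) ℂ}
    {L : SPoly d →ₗ[ℂ] ℂ} (hL : IsFeas d t ρ L) (n : ℕ) (m : SVar d →₀ ℕ) (hm : m.degree = n)
    (hn : n ≤ t) :
    (L (monomial m 1 * sconj (monomial m 1))).re ≤ Rad d ρ ^ n * (L 1).re := by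
  induction n generalizing m with
  | zero =>
    obtain rfl := (Finsupp.degree_eq_zero_iff m).1 hm
    rw [← C_apply, C_1, sconj_one]
    simp
  | succ n ih =>
    obtain ⟨s, hs⟩ : ∃ s, m s ≠ 0 := by
      by_contra! h
      obtain rfl : m = 0 := Finsupp.ext h
      simp at hm
    obtain ⟨m', rfl⟩ : ∃ m', m = m' + Finsupp.single s 1 :=
      ⟨m - Finsupp.single s 1, (tsub_add_cancel_of_le (by simpa using Nat.one_le_iff_ne_zero.2 hs)).symm⟩
    have hm' : m'.degree = n := by
      rw [map_add, Finsupp.degree_single] at hm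
      omega
    set w : SPoly d := monomial m' 1 with hw
    have hwd : w.totalDegree = n := by rw [hw, totalDegree_monomial_one, hm']
    have hmul : (monomial (m' + Finsupp.single s 1) 1 : SPoly d) = w * X s := by
      rw [hw, X, monomial_mul, one_mul]
    have h0 := hL.sq_nonneg (p := w) (by omega)
    have h1 := hL.loc_nonneg (Or.inl (exists_loc ρ s)) (p := w) (by
      have e1 := totalDegree_mul
        (C ((Real.sqrt (rhoMax d ρ) : ℝ) : ℂ) - X s * sconj (X s)) (w * sconj w)
      have e2 := totalDegree_sub (C ((Real.sqrt (rhoMax d ρ) : ℝ) : ℂ)) (X s * sconj (X s))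
      have e3 := totalDegree_mul (X s) (sconj (X s : SPoly d))
      have e4 := totalDegree_mul w (sconj w)
      rw [totalDegree_C, Nat.zero_max] at e2
      rw [totalDegree_sconj, totalDegree_X] at e3
      rw [totalDegree_sconj] at e4
      omega)
    rw [sub_mul, ← smul_eq_C_mul, map_sub, map_smul, smul_eq_mul] at h1
    have h1' := (Complex.le_def.1 h1).1
    have h0' := (Complex.le_def.1 h0).1
    rw [Complex.sub_re, Complex.re_ofReal_mul, Complex.zero_re] at h1'
    rw [Complex.zero_re] at h0'
    have e : w * X s * sconj (w * X s) = X s * sconj (X s) * (w * sconj w) := by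
      rw [sconj_mul]; ring
    rw [hmul, e]
    have hih := ih m' hm' (by omega)
    have hR : Real.sqrt (rhoMax d ρ) ≤ Rad d ρ := le_max_right _ _
    have hR1 := one_le_Rad ρ
    calc _ ≤ Real.sqrt (rhoMax d ρ) * (L (w * sconj w)).re := by linarith
      _ ≤ Rad d ρ * (L (w * sconj w)).re := by gcongr
      _ ≤ Rad d ρ * (Rad d ρ ^ n * (L 1).re) := by gcongr
      _ = _ := by ring

theorem IsFeas.one_nonneg {d t : ℕ} {ρ : Matrix (Fin d × Fin d) (Fin d × Fin d) ℂ}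
    {L : SPoly d →ₗ[ℂ] ℂ} (hL : IsFeas d t ρ L) : 0 ≤ (L 1).re := by
  have h := hL.sq_nonneg (p := 1) (by simp)
  rw [sconj_one, one_mul] at h
  exact (Complex.le_def.1 h).1

/-- The arithmetic-geometric form of Cauchy-Schwarz for the sesquilinear form `L(p q̄)`. -/
theorem IsFeas.two_norm_le {d t : ℕ} {ρ : Matrix (Fin d × Fin d) (Fin d × Fin d) ℂ}
    {L : SPoly d →ₗ[ℂ] ℂ} (hL : IsFeas d t ρ L) {p q : SPoly d} (hp : p.totalDegree ≤ t)
    (hq : q.totalDegree ≤ t) :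
    2 * ‖L (p * sconj q)‖ ≤ (L (p * sconj p)).re + (L (q * sconj q)).re := by
  obtain ⟨z, hz, hzL⟩ : ∃ z : ℂ, ‖z‖ = 1 ∧ z * L (p * sconj q) = ‖L (p * sconj q)‖ := by
    rcases eq_or_ne (L (p * sconj q)) 0 with h | h
    · exact ⟨1, by simp, by simp [h]⟩
    · have hn : (‖L (p * sconj q)‖ : ℂ) ≠ 0 := by simpa using h
      refine ⟨star (L (p * sconj q)) / ‖L (p * sconj q)‖, ?_, ?_⟩
      · rw [norm_div, norm_star, Complex.norm_real, norm_norm, div_self (by simpa using h)]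
      · rw [div_mul_eq_mul_div, div_eq_iff hn]
        have := Complex.conj_mul' (L (p * sconj q))
        rw [sq] at this
        exact this
  have hstar : L (q * sconj p) = star (L (p * sconj q)) := by
    rw [← hL.1, sconj_mul, sconj_sconj, mul_comm]
  have h := hL.sq_nonneg (p := C z * p - q) (by
    have e1 := totalDegree_sub (C z * p) q
    have e2 := totalDegree_mul (C z) p
    rw [totalDegree_C] at e2
    omega)
  have hs : sconj (C z * p - q) = C (star z) * sconj p - sconj q := by
    rw [sub_eq_add_neg, ← neg_one_mul q, ← C_1, ← C_neg, sconj_add, sconj_mul, sconj_mul, sconj_C,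
      sconj_C]
    simp [sub_eq_add_neg]
  have hexp : (C z * p - q) * sconj (C z * p - q) =
      (z * star z) • (p * sconj p) + q * sconj q - z • (p * sconj q)
        - star z • (q * sconj p) := by
    rw [hs]
    simp only [smul_eq_C_mul, C_mul]
    ring
  have hzz : z * star z = 1 := by
    have := Complex.mul_conj' z
    rw [hz] at this
    simpa using this
  have hb : star z * star (L (p * sconj q)) = ‖L (p * sconj q)‖ := by
    rw [← star_mul', hzL]
    exact Complex.conj_ofReal _
  rw [hexp, hzz, one_smul, map_sub, map_sub, map_add, map_smul, map_smul, smul_eq_mul,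
    smul_eq_mul, hstar, hb, hzL] at h
  have := (Complex.le_def.1 h).1
  simp only [Complex.sub_re, Complex.add_re, Complex.ofReal_re, Complex.zero_re] at this
  linarith

theorem IsFeas.mom_le {d t : ℕ} {ρ : Matrix (Fin d × Fin d) (Fin d × Fin d) ℂ}
    {L : SPoly d →ₗ[ℂ] ℂ} (hL : IsFeas d t ρ L) {m : SVar d →₀ ℕ} (hm : m.degree ≤ 2 * t) :
    ‖mom L m‖ ≤ Rad d ρ ^ m.degree * (L 1).re := by
  obtain ⟨m₁, hle, hd⟩ := Finsupp.exists_le_degree_eq m (min t m.degree) (min_le_right _ _)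
  obtain ⟨m₂, rfl⟩ := exists_add_of_le hle
  have hadd : (m₁ + m₂).degree = m₁.degree + m₂.degree := map_add _ _ _
  set m₃ := m₂.mapDomain vbar with hm₃
  have hd₃ : m₃.degree = m₂.degree := Finsupp.degree_mapDomain _ _
  have hs : sconj (monomial m₃ 1 : SPoly d) = monomial m₂ 1 := by
    rw [hm₃, ← sconj_monomial, sconj_sconj]
  have h := hL.two_norm_le (p := monomial m₁ 1) (q := monomial m₃ 1)
    (by rw [totalDegree_monomial_one]; omega) (by rw [totalDegree_monomial_one]; omega)
  have h1 := hL.diag_le _ m₁ rfl (by omega)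
  have h2 := hL.diag_le _ m₃ rfl (by omega)
  have h3 : Rad d ρ ^ m₁.degree * (L 1).re ≤ Rad d ρ ^ (m₁ + m₂).degree * (L 1).re :=
    mul_le_mul_of_nonneg_right (pow_le_pow_right₀ (one_le_Rad ρ) (by omega)) hL.one_nonneg
  have h4 : Rad d ρ ^ m₃.degree * (L 1).re ≤ Rad d ρ ^ (m₁ + m₂).degree * (L 1).re :=
    mul_le_mul_of_nonneg_right (pow_le_pow_right₀ (one_le_Rad ρ) (by omega)) hL.one_nonneg
  have h5 : mom L (m₁ + m₂) = L (monomial m₁ 1 * sconj (monomial m₃ 1)) := by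
    rw [hs, monomial_mul, one_mul, mom]
  rw [h5]
  linarith

/-! ### Existence of a feasible functional -/

/-- The point of `ℂ^{4d}` at which the barred variables are the conjugates of `u` and `v`. -/
def pt {d : ℕ} (u v : Fin d → ℂ) : SVar d → ℂ :=
  Sum.elim (Sum.elim u fun i => star (u i)) (Sum.elim v fun j => star (v j))

theorem aeval_sconj {d : ℕ} (u v : Fin d → ℂ) (p : SPoly d) :
    aeval (pt u v) (sconj p) = star (aeval (pt u v) p) := by
  induction p using MvPolynomial.induction_on with
  | C a => simp [sconj_C]
  | add p q hp hq => rw [sconj_add, map_add, map_add, hp, hq, star_add]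
  | mul_X p s hp =>
    rw [sconj_mul, map_mul, map_mul, hp, star_mul', sconj_X, aeval_X, aeval_X]
    rcases s with (s | s) | (s | s) <;> simp [pt, vbar]

theorem aeval_momPoly {d : ℕ} (u v : Fin d → ℂ) (i i' j j' : Fin d) :
    aeval (pt u v) (momPoly i i' j j') = pureState d u v (i, j) (i', j') := by
  simp [momPoly, pt, xv, xbv, yv, ybv, pureState, mul_assoc]

theorem pureState_diag {d : ℕ} (u v : Fin d → ℂ) (p : Fin d × Fin d) :
    (pureState d u v p p).re = Complex.normSq (u p.1) * Complex.normSq (v p.2) := by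
  simp only [pureState, Matrix.of_apply, Complex.mul_conj]
  rw [← Complex.ofReal_mul, Complex.ofReal_re]

/-- A nonnegative multiple of `xx* ⊗ yy*` is `uu* ⊗ vv*` with the two factors balanced, so that
`max |u_i|² = max |v_j|²`; both are then at most the square root of the largest diagonal entry. -/
theorem exists_balanced {d : ℕ} {c : ℝ} (hc : 0 ≤ c) (x y : Fin d → ℂ)
    (hx : ∑ i, Complex.normSq (x i) = 1) (hy : ∑ i, Complex.normSq (y i) = 1) :
    ∃ u v : Fin d → ℂ, (c : ℂ) • pureState d x y = pureState d u v ∧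
      ∀ M, (∀ p, (pureState d u v p p).re ≤ M) →
        (∀ i, Complex.normSq (u i) ≤ Real.sqrt M) ∧ ∀ j, Complex.normSq (v j) ≤ Real.sqrt M := by
  have hmax : ∀ z : Fin d → ℂ, ∑ i, Complex.normSq (z i) = 1 →
      ∃ i₀, 0 < Complex.normSq (z i₀) ∧ ∀ i, Complex.normSq (z i) ≤ Complex.normSq (z i₀) := by
    intro z hz
    obtain ⟨i, -, hi⟩ := Finset.exists_ne_zero_of_sum_ne_zero (hz.trans_ne one_ne_zero)
    have : Nonempty (Fin d) := ⟨i⟩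
    obtain ⟨i₀, h⟩ := Finite.exists_max fun i => Complex.normSq (z i)
    exact ⟨i₀, ((Complex.normSq_nonneg _).lt_of_ne' hi).trans_le (h i), h⟩
  obtain ⟨i₀, hA, hi⟩ := hmax x hx
  obtain ⟨j₀, hB, hj⟩ := hmax y hy
  set A := Complex.normSq (x i₀)
  set B := Complex.normSq (y j₀)
  set s := Real.sqrt (c * A * B) with hs
  have hs0 : 0 ≤ s := Real.sqrt_nonneg _
  have hss : s * s = c * A * B := Real.mul_self_sqrt (by positivity)
  have ha : Real.sqrt (s / A) * Real.sqrt (s / A) = s / A := Real.mul_self_sqrt (by positivity)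
  have hb : Real.sqrt (s / B) * Real.sqrt (s / B) = s / B := Real.mul_self_sqrt (by positivity)
  have hab : s / A * (s / B) = c := by
    rw [div_mul_div_comm, hss]
    field_simp
  have hstate : (c : ℂ) • pureState d x y = pureState d
      (fun i => (Real.sqrt (s / A) : ℂ) * x i) (fun j => (Real.sqrt (s / B) : ℂ) * y j) := by
    ext p q
    have h : (c : ℂ) = ((Real.sqrt (s / A) : ℂ) * (Real.sqrt (s / A) : ℂ)) *
        ((Real.sqrt (s / B) : ℂ) * (Real.sqrt (s / B) : ℂ)) := by
      rw [← Complex.ofReal_mul, ← Complex.ofReal_mul, ha, hb, ← Complex.ofReal_mul, hab]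
    simp only [Matrix.smul_apply, pureState, Matrix.of_apply, smul_eq_mul, map_mul,
      Complex.conj_ofReal, h]
    ring
  have hu : ∀ i, Complex.normSq ((Real.sqrt (s / A) : ℂ) * x i) =
      s / A * Complex.normSq (x i) := fun i => by
    rw [Complex.normSq_mul, Complex.normSq_ofReal, ha]
  have hv : ∀ i, Complex.normSq ((Real.sqrt (s / B) : ℂ) * y i) =
      s / B * Complex.normSq (y i) := fun i => by
    rw [Complex.normSq_mul, Complex.normSq_ofReal, hb]
  refine ⟨_, _, hstate, fun M hM => ?_⟩
  have hsM : s ≤ Real.sqrt M := by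
    refine Real.le_sqrt_of_sq_le ?_
    have h := hM (i₀, j₀)
    rw [pureState_diag, hu, hv] at h
    refine le_trans (le_of_eq ?_) h
    change s ^ 2 = s / A * A * (s / B * B)
    field_simp
  constructor
  · intro i
    rw [hu]
    calc _ ≤ s / A * A := by gcongr; exact hi i
      _ = s := by field_simp
      _ ≤ _ := hsM
  · intro j
    rw [hv]
    calc _ ≤ s / B * B := by gcongr; exact hj j
      _ = s := by field_simp
      _ ≤ _ := hsM

/-- The quadratic form of a pure product state is a squared modulus. -/
theorem pureState_form {d : ℕ} (u v : Fin d → ℂ) (a : Fin d → Fin d → ℂ) :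
    0 ≤ ∑ i, ∑ j, ∑ i', ∑ j', pureState d u v (i, j) (i', j') * (a i j * star (a i' j')) := by
  have h : ∑ i, ∑ j, ∑ i', ∑ j', pureState d u v (i, j) (i', j') * (a i j * star (a i' j')) =
      (∑ i, ∑ j, u i * v j * a i j) * star (∑ i, ∑ j, u i * v j * a i j) := by
    simp only [star_sum, Finset.sum_mul]
    refine Finset.sum_congr rfl fun i _ => Finset.sum_congr rfl fun j _ => ?_
    simp only [Finset.mul_sum]
    refine Finset.sum_congr rfl fun i' _ => Finset.sum_congr rfl fun j' _ => ?_
    simp only [pureState, Matrix.of_apply, star_mul', Complex.star_def]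
    ring
  rw [h]
  exact mul_star_self_nonneg _

theorem exists_isFeasInf {d : ℕ} {ρ : Matrix (Fin d × Fin d) (Fin d × Fin d) ℂ}
    (hρ : ρ ∈ SEP d) : ∃ L : SPoly d →ₗ[ℂ] ℂ, IsFeasInf d ρ L := by
  obtain ⟨r, c, x, y, hc, hx, hy, hsum⟩ := hρ
  choose u v huv hbal using fun l => exists_balanced (hc l) (x l) (y l) (hx l) (hy l)
  simp only [huv] at hsum
  have hent : ∀ p q, ρ p q = ∑ l, pureState d (u l) (v l) p q := by
    intro p q
    rw [hsum, Matrix.sum_apply]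
  have hdiag : ∀ l p, (pureState d (u l) (v l) p p).re ≤ rhoMax d ρ := by
    intro l p
    refine le_trans ?_ (le_ciSup (f := fun p => (ρ p p).re) (Set.finite_range _).bddAbove p)
    rw [hent, Complex.re_sum]
    refine Finset.single_le_sum (f := fun l => (pureState d (u l) (v l) p p).re)
      (fun l _ => ?_) (Finset.mem_univ l)
    rw [pureState_diag]
    exact mul_nonneg (Complex.normSq_nonneg _) (Complex.normSq_nonneg _)
  have hb := fun l => hbal l _ (hdiag l)
  refine ⟨∑ l, (aeval (pt (u l) (v l))).toLinearMap, ?_, ?_, ?_, ?_⟩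
  · intro p
    simp [LinearMap.sum_apply, aeval_sconj, star_sum]
  · intro i i' j j'
    simp [LinearMap.sum_apply, aeval_momPoly, hent]
  · rintro q ⟨N, a, g, p, ha, hg, rfl⟩
    rw [LinearMap.sum_apply]
    refine Finset.sum_nonneg fun l _ => ?_
    rw [map_sum]
    refine Finset.sum_nonneg fun s _ => ?_
    rw [AlgHom.toLinearMap_apply, map_mul, map_mul, map_mul, aeval_sconj]
    refine mul_nonneg ?_ (mul_nonneg ?_ (mul_star_self_nonneg _))
    · rw [aeval_C]
      exact Complex.zero_le_real.2 (ha s)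
    · rcases hg s with (⟨i, hi⟩ | ⟨i, hi⟩) | h1
      · rw [← hi]
        simp only [map_sub, map_mul, aeval_C, aeval_X, pt, xv, xbv, Sum.elim_inl, Sum.elim_inr,
          Algebra.algebraMap_self_apply, Complex.star_def, Complex.mul_conj, ← Complex.ofReal_sub]
        exact Complex.zero_le_real.2 (sub_nonneg.2 ((hb l).1 i))
      · rw [← hi]
        simp only [map_sub, map_mul, aeval_C, aeval_X, pt, yv, ybv, Sum.elim_inl, Sum.elim_inr,
          Algebra.algebraMap_self_apply, Complex.star_def, Complex.mul_conj, ← Complex.ofReal_sub]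
        exact Complex.zero_le_real.2 (sub_nonneg.2 ((hb l).2 i))
      · rw [Set.mem_singleton_iff.1 h1, map_one]
        exact zero_le_one
  · intro q
    simp only [LinearMap.sum_apply, AlgHom.toLinearMap_apply, map_mul, map_sub, aeval_C,
      aeval_momPoly, aeval_sconj, Algebra.algebraMap_self_apply]
    -- at the `l`-th point the form is that of `∑_{k ≠ l} u_k u_k* ⊗ v_k v_k*`
    have hsub : ∀ l p p', ρ p p' - pureState d (u l) (v l) p p' =
        ∑ k ∈ Finset.univ.erase l, pureState d (u k) (v k) p p' := by
      intro l p p'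
      rw [hent, ← Finset.add_sum_erase _ _ (Finset.mem_univ l), add_sub_cancel_left]
    have hswap : ∀ F : Fin d → Fin d → Fin d → Fin d → Fin r → ℂ,
        ∀ S : Finset (Fin r), ∑ i, ∑ j, ∑ i', ∑ j', ∑ l ∈ S, F i j i' j' l =
        ∑ l ∈ S, ∑ i, ∑ j, ∑ i', ∑ j', F i j i' j' l := by
      intro F S
      simp only [← Finset.sum_comm (s := S)]
    rw [hswap]
    refine Finset.sum_nonneg fun l _ => ?_
    simp only [hsub, Finset.sum_mul]
    rw [hswap]
    exact Finset.sum_nonneg fun k _ => pureState_form _ _ _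

/-! ### Compactness -/

/-- Families of moments obeying the a priori bounds of a feasible functional with `L(1) ≤ M`. -/
def box (d : ℕ) (ρ : Matrix (Fin d × Fin d) (Fin d × Fin d) ℂ) (M : ℝ) :
    Set ((SVar d →₀ ℕ) → ℂ) :=
  Set.univ.pi fun m => Metric.closedBall 0 (Rad d ρ ^ m.degree * M)

theorem isCompact_box (d : ℕ) (ρ : Matrix (Fin d × Fin d) (Fin d × Fin d) ℂ) (M : ℝ) :
    IsCompact (box d ρ M) :=
  isCompact_univ_pi fun _ => isCompact_closedBall _ _

theorem IsFeas.trunc_mem_box {d t : ℕ} {ρ : Matrix (Fin d × Fin d) (Fin d × Fin d) ℂ}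
    {L : SPoly d →ₗ[ℂ] ℂ} (hL : IsFeas d t ρ L) {M : ℝ} (hM : (L 1).re ≤ M) :
    trunc t L ∈ box d ρ M := by
  intro m _
  have hR := one_le_Rad ρ
  have hpow : (0 : ℝ) ≤ Rad d ρ ^ m.degree := by positivity
  rw [mem_closedBall_zero_iff, trunc]
  split_ifs with h
  · exact (hL.mom_le h).trans (mul_le_mul_of_nonneg_left hM hpow)
  · rw [norm_zero]
    exact mul_nonneg hpow (hL.one_nonneg.trans hM)

/-- The moments of the order-`t` feasible functionals that lie in the compact box. -/
def feasBox (d t : ℕ) (ρ : Matrix (Fin d × Fin d) (Fin d × Fin d) ℂ) (M : ℝ) :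
    Set ((SVar d →₀ ℕ) → ℂ) :=
  box d ρ M ∩ {f | IsFeas d t ρ (toL f)}

theorem isCompact_feasBox (d t : ℕ) (ρ : Matrix (Fin d × Fin d) (Fin d × Fin d) ℂ) (M : ℝ) :
    IsCompact (feasBox d t ρ M) :=
  (isCompact_box d ρ M).inter_right (isClosed_isFeas t ρ)

theorem continuous_obj (d : ℕ) :
    Continuous fun f : (SVar d →₀ ℕ) → ℂ => ENNReal.ofReal (toL f 1).re :=
  ENNReal.continuous_ofReal.comp (Complex.continuous_re.comp (continuous_toL 1))

/-- If some `L₀` is feasible, the optimum of the order-`t` program is attained inside the box of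
`M = L₀(1)`: truncation preserves feasibility and the objective, and functionals with `L(1) > M`
do not compete. -/
theorem exists_attained {d t : ℕ} {ρ : Matrix (Fin d × Fin d) (Fin d × Fin d) ℂ} (ht : 2 ≤ t)
    {L₀ : SPoly d →ₗ[ℂ] ℂ} (hL₀ : IsFeas d t ρ L₀) :
    ∃ f ∈ feasBox d t ρ (L₀ 1).re, ENNReal.ofReal (toL f 1).re = xiSep d t ρ := by
  have hone : ∀ L : SPoly d →ₗ[ℂ] ℂ, toL (trunc t L) 1 = L 1 := fun L => toL_trunc L (by simp)
  have hmem : ∀ L, IsFeas d t ρ L → (L 1).re ≤ (L₀ 1).re →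
      trunc t L ∈ feasBox d t ρ (L₀ 1).re := fun L hL hM =>
    ⟨hL.trunc_mem_box hM, isFeas_trunc ht hL⟩
  obtain ⟨f, hf, hmin⟩ := (isCompact_feasBox d t ρ (L₀ 1).re).exists_isMinOn
    ⟨_, hmem L₀ hL₀ le_rfl⟩ (continuous_obj d).continuousOn
  refine ⟨f, hf, le_antisymm (le_sInf ?_) (sInf_le ⟨_, hf.2, rfl⟩)⟩
  rintro e ⟨L, hL, rfl⟩
  rcases le_total (L 1).re (L₀ 1).re with h | h
  · have := hmin (hmem L hL h)
    simpa only [Set.mem_ofPred_eq, hone] using this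
  · have := hmin (hmem L₀ hL₀ le_rfl)
    simp only [Set.mem_ofPred_eq, hone] at this
    exact this.trans (ENNReal.ofReal_le_ofReal h)

theorem xiSep_mono {d : ℕ} (ρ : Matrix (Fin d × Fin d) (Fin d × Fin d) ℂ) :
    Monotone fun t => xiSep d t ρ := fun _ _ hst =>
  sInf_le_sInf fun _ ⟨L, hL, he⟩ => ⟨L, hL.anti hst, he⟩

theorem xiSep_le_xiSepInf {d : ℕ} (ρ : Matrix (Fin d × Fin d) (Fin d × Fin d) ℂ) (t : ℕ) :
    xiSep d t ρ ≤ xiSepInf d ρ :=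
  sInf_le_sInf fun _ ⟨L, hL, he⟩ => ⟨L, hL.isFeas t, he⟩

/-- A limit of optimal functionals: the sets of order-`t` feasible points of the box with value at
most `sup_t ξ_t` are nested, nonempty and compact, so they have a common point. -/
theorem exists_limit {d : ℕ} {ρ : Matrix (Fin d × Fin d) (Fin d × Fin d) ℂ}
    (hρ : ρ ∈ SEP d) : ∃ L : SPoly d →ₗ[ℂ] ℂ, IsFeasInf d ρ L ∧
      ENNReal.ofReal (L 1).re ≤ ⨆ t, xiSep d t ρ := by
  obtain ⟨L₀, hL₀⟩ := exists_isFeasInf hρ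
  let B : ℕ → Set ((SVar d →₀ ℕ) → ℂ) := fun t =>
    feasBox d (t + 2) ρ (L₀ 1).re ∩ {f | ENNReal.ofReal (toL f 1).re ≤ ⨆ t, xiSep d t ρ}
  have hcl : IsClosed {f : (SVar d →₀ ℕ) → ℂ |
      ENNReal.ofReal (toL f 1).re ≤ ⨆ t, xiSep d t ρ} :=
    isClosed_le (continuous_obj d) continuous_const
  have hcpt : ∀ t, IsCompact (B t) := fun t => (isCompact_feasBox d (t + 2) ρ _).inter_right hcl
  obtain ⟨f, hf⟩ := IsCompact.nonempty_iInter_of_sequence_nonempty_isCompact_isClosed B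
    (fun t f hf => ⟨⟨hf.1.1, hf.1.2.anti (by omega)⟩, hf.2⟩)
    (fun t => by
      obtain ⟨f, hf, hv⟩ := exists_attained (t := t + 2) (by omega) (hL₀.isFeas _)
      exact ⟨f, hf, hv.trans_le (le_iSup (fun t => xiSep d t ρ) (t + 2))⟩)
    (hcpt 0) (fun t => (hcpt t).isClosed)
  rw [Set.mem_iInter] at hf
  exact ⟨toL f, isFeasInf_of_forall fun t => (hf t).1.2, (hf 0).2⟩

/-- for separable `ρ`, the infimum defining `ξ_t^sep(ρ)` is
attained for every integer `t ≥ 2` and for `t = ∞`, and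
`ξ_t^sep(ρ) → ξ_∞^sep(ρ)` as `t → ∞`. -/
theorem stmt8 {d : ℕ} (ρ : Matrix (Fin d × Fin d) (Fin d × Fin d) ℂ)
    (hρ : ρ ∈ SEP d) :
    (∀ t : ℕ, 2 ≤ t → ∃ L : SPoly d →ₗ[ℂ] ℂ,
      IsFeas d t ρ L ∧ ENNReal.ofReal (L 1).re = xiSep d t ρ) ∧
    (∃ L : SPoly d →ₗ[ℂ] ℂ,
      IsFeasInf d ρ L ∧ ENNReal.ofReal (L 1).re = xiSepInf d ρ) ∧
    Filter.Tendsto (fun t : ℕ => xiSep d t ρ) Filter.atTop (nhds (xiSepInf d ρ)) := by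
  obtain ⟨L, hL, hle⟩ := exists_limit hρ
  have hge : xiSepInf d ρ ≤ ENNReal.ofReal (L 1).re := sInf_le ⟨L, hL, rfl⟩
  have hsup : ⨆ t, xiSep d t ρ ≤ xiSepInf d ρ := iSup_le (xiSep_le_xiSepInf ρ)
  refine ⟨fun t ht => ?_, ⟨L, hL, le_antisymm (hle.trans hsup) hge⟩, ?_⟩
  · obtain ⟨f, hf, hv⟩ := exists_attained ht (hL.isFeas t)
    exact ⟨toL f, hf.2, hv⟩
  · rw [← le_antisymm hsup (hge.trans hle)]
    exact tendsto_atTop_iSup (xiSep_mono ρ)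
end

section
/- SEP_d = ⋂_{t ≥ 2} 𝓡_t, where for each integer t ≥ 2 the set 𝓡_t consists of all Hermitian ρ ∈ 𝓗^d ⊗ 𝓗^d for which there exists a Hermitian linear functional L on ℂ[x,x̄,y,ȳ]_{2t} such that: (a) L(x_i x̄_{i'} y_j ȳ_{j'}) = ρ_{ij,i'j'} for all i,i',j,j' ∈ [d]; (b) L((1 − ∑_{i=1}^d x_i x̄_i)·p) = 0 and L((1 − ∑_{j=1}^d y_j ȳ_j)·q) = 0 for all polynomials p, q with deg((1−∑ x_i x̄_i)p) ≤ 2t and deg((1−∑ y_j ȳ_j)q) ≤ 2t; (c) L(p·p̄) ≥ 0 for all polynomials p of degree at most t. -/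
/-!
`SEP_d ⊆ 𝓡_t` holds because positive combinations of point evaluations on the product of the two
spheres are feasible functionals. The converse is a Positivstellensatz on that product, obtained
from Krein–Milman.

Let `sqCone d` be the cone of sums of Hermitian squares plus the ideal of the two sphere equations.
It is Archimedean (`bdd`): for every `p` some `N - p p̄` lies in it. Since every polynomial is a
combination of Hermitian squares (`polarize`), a functional that is nonnegative on the cone is
bounded at each polynomial by a constant times its mass `L 1`; as an element of the cone involves
only finitely many generators, the same holds eventually for the truncated functionals `L_t`
(`bound_eventually`), whose mass is the trace of `ρ`. So they have a pointwise limit along an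
ultrafilter (`exists_limit`), a positive functional on all polynomials with moment matrix `ρ`.

After normalization this limit is a point of the state space `states d`, a compact convex set of
functions on polynomials. Its extreme points are multiplicative (`extreme_mul`), i.e. evaluations at
points of the product of spheres, and their moment matrices are pure product states. By Krein–Milman
`ρ`, up to scaling, is in the closed convex hull of the pure product states, and the convex hull of
this compact set is already closed by Carathéodory.
-/

open MvPolynomial ComplexOrder
open scoped ENNReal

/-- The relaxation `𝓡_t`. -/
def Rt (d t : ℕ) : Set (Matrix (Fin d × Fin d) (Fin d × Fin d) ℂ) :=
  { ρ | ρ.IsHermitian ∧ ∃ L : SPoly d →ₗ[ℂ] ℂ,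
      (∀ p, L (sconj p) = star (L p)) ∧
      (∀ i i' j j', L (momPoly i i' j j') = ρ (i, j) (i', j')) ∧
      (∀ p : SPoly d,
        (((1 : SPoly d) - ∑ i, X (xv i) * X (xbv i)) * p).totalDegree ≤ 2 * t →
        L (((1 : SPoly d) - ∑ i, X (xv i) * X (xbv i)) * p) = 0) ∧
      (∀ q : SPoly d,
        (((1 : SPoly d) - ∑ j, X (yv j) * X (ybv j)) * q).totalDegree ≤ 2 * t →
        L (((1 : SPoly d) - ∑ j, X (yv j) * X (ybv j)) * q) = 0) ∧
      (∀ p : SPoly d, p.totalDegree ≤ t → 0 ≤ L (p * sconj p)) }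

namespace SepHierarchy
variable {d : ℕ}

/-! ### The Archimedean cone -/

/-- Conjugation of polynomials as a ring homomorphism. -/
noncomputable def conjHom (d : ℕ) : SPoly d →+* SPoly d :=
  (rename (Sum.map (Sum.elim Sum.inr Sum.inl) (Sum.elim Sum.inr Sum.inl)) :
    SPoly d →ₐ[ℂ] SPoly d).toRingHom.comp (map (starRingEnd ℂ))

lemma sconj_eq (p : SPoly d) : sconj p = conjHom d p := rfl

lemma sconj_add (p q : SPoly d) : sconj (p + q) = sconj p + sconj q := by
  simp [sconj_eq]

lemma sconj_sub (p q : SPoly d) : sconj (p - q) = sconj p - sconj q := by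
  simp [sconj_eq]

lemma sconj_mul (p q : SPoly d) : sconj (p * q) = sconj p * sconj q := by
  simp [sconj_eq]

lemma sconj_C (c : ℂ) : sconj (C c : SPoly d) = C (starRingEnd ℂ c) := by
  simp [sconj]

lemma sconj_one : sconj (1 : SPoly d) = 1 := by
  simp [sconj_eq]

lemma sconj_xv (i : Fin d) : sconj (X (xv i) : SPoly d) = X (xbv i) := by
  simp [sconj, xv, xbv]

lemma sconj_xbv (i : Fin d) : sconj (X (xbv i) : SPoly d) = X (xv i) := by
  simp [sconj, xv, xbv]

lemma sconj_yv (i : Fin d) : sconj (X (yv i) : SPoly d) = X (ybv i) := by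
  simp [sconj, yv, ybv]

lemma sconj_ybv (i : Fin d) : sconj (X (ybv i) : SPoly d) = X (yv i) := by
  simp [sconj, yv, ybv]

/-- The polynomial `1 - ∑ x_i x̄_i` cutting out the sphere in the `x` variables. -/
noncomputable def sphX (d : ℕ) : SPoly d := 1 - ∑ i, X (xv i) * X (xbv i)

/-- The polynomial `1 - ∑ y_j ȳ_j` cutting out the sphere in the `y` variables. -/
noncomputable def sphY (d : ℕ) : SPoly d := 1 - ∑ j, X (yv j) * X (ybv j)

/-- The cone of sums of Hermitian squares plus the ideal of the two sphere equations. -/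
noncomputable def sqCone (d : ℕ) : AddSubmonoid (SPoly d) :=
  AddSubmonoid.closure
    {q | (∃ p, q = p * sconj p) ∨ (∃ p, q = sphX d * p) ∨ ∃ p, q = sphY d * p}

lemma sq_mem (p : SPoly d) : p * sconj p ∈ sqCone d :=
  AddSubmonoid.subset_closure (Or.inl ⟨p, rfl⟩)

lemma sphX_mem (p : SPoly d) : sphX d * p ∈ sqCone d :=
  AddSubmonoid.subset_closure (Or.inr (Or.inl ⟨p, rfl⟩))

lemma sphY_mem (p : SPoly d) : sphY d * p ∈ sqCone d :=
  AddSubmonoid.subset_closure (Or.inr (Or.inr ⟨p, rfl⟩))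

lemma sq_mul_mem (p : SPoly d) {q : SPoly d} (hq : q ∈ sqCone d) :
    p * sconj p * q ∈ sqCone d := by
  induction hq using AddSubmonoid.closure_induction with
  | mem q hq =>
    rcases hq with ⟨r, rfl⟩ | ⟨r, rfl⟩ | ⟨r, rfl⟩
    · convert sq_mem (p * r) using 1
      rw [sconj_mul]; ring
    · convert sphX_mem (p * sconj p * r) using 1
      ring
    · convert sphY_mem (p * sconj p * r) using 1
      ring
  | zero => simp
  | add a b _ _ ha hb => rw [mul_add]; exact add_mem ha hb

lemma C_mem {c : ℝ} (hc : 0 ≤ c) : (C (c : ℂ) : SPoly d) ∈ sqCone d := by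
  convert sq_mem (C ((√c : ℝ) : ℂ) : SPoly d) using 1
  rw [sconj_C, ← C_mul, Complex.conj_ofReal, ← Complex.ofReal_mul, Real.mul_self_sqrt hc]

lemma C_mul_mem {c : ℝ} (hc : 0 ≤ c) {q : SPoly d} (hq : q ∈ sqCone d) :
    C (c : ℂ) * q ∈ sqCone d := by
  convert sq_mul_mem (C ((√c : ℝ) : ℂ) : SPoly d) hq using 2
  rw [sconj_C, ← C_mul, Complex.conj_ofReal, ← Complex.ofReal_mul, Real.mul_self_sqrt hc]

/-- `p` is bounded modulo the cone: `N - p p̄` lies in `sqCone d` for some real `N ≥ 0`. -/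
def Bdd (p : SPoly d) : Prop :=
  ∃ N : ℝ, 0 ≤ N ∧ C (N : ℂ) - p * sconj p ∈ sqCone d

lemma bdd_C (c : ℂ) : Bdd (C c : SPoly d) := by
  refine ⟨Complex.normSq c, Complex.normSq_nonneg c, ?_⟩
  rw [sconj_C, ← C_mul, Complex.mul_conj, sub_self]
  exact zero_mem _

lemma Bdd.add {p q : SPoly d} (hp : Bdd p) (hq : Bdd q) : Bdd (p + q) := by
  obtain ⟨N, hN, h1⟩ := hp
  obtain ⟨M, hM, h2⟩ := hq
  refine ⟨2 * N + 2 * M, by positivity, ?_⟩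
  -- the parallelogram identity
  have := add_mem (add_mem (add_mem h1 h1) (add_mem h2 h2)) (sq_mem (p - q))
  convert this using 1
  rw [sconj_add, sconj_sub]
  push_cast
  rw [C_add, C_mul, C_mul]
  have : (C (2 : ℂ) : SPoly d) = 2 := map_ofNat C 2
  rw [this]; ring

lemma Bdd.mul {p q : SPoly d} (hp : Bdd p) (hq : Bdd q) : Bdd (p * q) := by
  obtain ⟨N, hN, h1⟩ := hp
  obtain ⟨M, hM, h2⟩ := hq
  refine ⟨N * M, by positivity, ?_⟩
  convert add_mem (C_mul_mem hN h2) (sq_mul_mem q h1) using 1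
  rw [sconj_mul]
  push_cast
  rw [C_mul]; ring

/-- On a sphere, each coordinate is bounded by `1`, because
`1 - v_i v̄_i = ∑_{j ≠ i} v_j v̄_j + (1 - ∑_j v_j v̄_j)`. -/
lemma bdd_coord {v w : Fin d → SPoly d} (h : ∀ i, sconj (v i) = w i)
    (h' : ∀ i, sconj (w i) = v i) (hs : 1 - ∑ i, v i * w i ∈ sqCone d) (i : Fin d) :
    Bdd (v i) ∧ Bdd (w i) := by
  have key : C ((1 : ℝ) : ℂ) - v i * w i ∈ sqCone d := by
    have : C ((1 : ℝ) : ℂ) - v i * w i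
        = (1 - ∑ i, v i * w i) + ∑ j ∈ Finset.univ.erase i, v j * w j := by
      rw [← Finset.add_sum_erase _ _ (Finset.mem_univ i)]
      simp
    rw [this]
    exact add_mem hs (sum_mem fun j _ => h j ▸ sq_mem (v j))
  refine ⟨⟨1, zero_le_one, (h i).symm ▸ key⟩, ⟨1, zero_le_one, ?_⟩⟩
  rw [h', mul_comm]
  exact key

/-- The cone is Archimedean: bounded polynomials form a subalgebra containing all the variables. -/
lemma bdd (p : SPoly d) : Bdd p := by
  induction p using MvPolynomial.induction_on with
  | C c => exact bdd_C c
  | add p q hp hq => exact hp.add hq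
  | mul_X p v hp =>
    refine hp.mul ?_
    have hX : 1 - ∑ i, X (xv i) * X (xbv i) ∈ sqCone d := by
      simpa [sphX] using sphX_mem (1 : SPoly d)
    have hY : 1 - ∑ i, X (yv i) * X (ybv i) ∈ sqCone d := by
      simpa [sphY] using sphY_mem (1 : SPoly d)
    rcases v with (i | i) | (i | i)
    · exact (bdd_coord sconj_xv sconj_xbv hX i).1
    · exact (bdd_coord sconj_xv sconj_xbv hX i).2
    · exact (bdd_coord sconj_yv sconj_ybv hY i).1
    · exact (bdd_coord sconj_yv sconj_ybv hY i).2

/-- Polarization: every polynomial is a complex combination of Hermitian squares. -/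
lemma polarize (p : SPoly d) :
    p = C (1 / 4) * ((p + 1) * sconj (p + 1) + C Complex.I * ((p + C Complex.I) * sconj (p + C Complex.I))
      - (p - 1) * sconj (p - 1) - C Complex.I * ((p - C Complex.I) * sconj (p - C Complex.I))) := by
  have h4 : (C (1 / 4 : ℂ) : SPoly d) * 4 = 1 := by
    have : (4 : SPoly d) = C 4 := (map_ofNat C 4).symm
    rw [this, ← C_mul]; norm_num
  have hI : (C Complex.I : SPoly d) * C Complex.I = -1 := by
    rw [← C_mul, Complex.I_mul_I]; simp
  simp only [sconj_add, sconj_sub, sconj_one, sconj_C, Complex.conj_I, C_neg]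
  linear_combination (-p) * h4 + C (1 / 4) * (2 * p - 2 * sconj p) * hI

/-- Each element of the cone involves finitely many generators, so functionals satisfying every
single constraint eventually along a filter are eventually nonnegative on it. -/
lemma cone_eventually {ι : Type*} {F : Filter ι} {L : ι → SPoly d →ₗ[ℂ] ℂ}
    (h0 : ∀ p, ∀ᶠ t in F, 0 ≤ L t (p * sconj p))
    (hX : ∀ p, ∀ᶠ t in F, L t (sphX d * p) = 0)
    (hY : ∀ p, ∀ᶠ t in F, L t (sphY d * p) = 0) {q : SPoly d} (hq : q ∈ sqCone d) :
    ∀ᶠ t in F, 0 ≤ L t q := by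
  induction hq using AddSubmonoid.closure_induction with
  | mem q hq =>
    rcases hq with ⟨r, rfl⟩ | ⟨r, rfl⟩ | ⟨r, rfl⟩
    · exact h0 r
    · exact (hX r).mono fun t h => h.ge
    · exact (hY r).mono fun t h => h.ge
  | zero => simp
  | add a b _ _ ha hb =>
    filter_upwards [ha, hb] with t h1 h2
    rw [map_add]; exact add_nonneg h1 h2

lemma map_C_mul (L : SPoly d →ₗ[ℂ] ℂ) (c : ℂ) (p : SPoly d) : L (C c * p) = c * L p := by
  have := L.map_smul c p
  rwa [smul_eq_C_mul, smul_eq_mul] at this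

lemma map_C (L : SPoly d →ₗ[ℂ] ℂ) (c : ℂ) : L (C c) = c * L 1 := by
  rw [← map_C_mul, mul_one]

/-- Asymptotically positive functionals are bounded at each polynomial, uniformly in terms of the
mass `L 1`: this is where the Archimedean property enters. -/
lemma bound_eventually (p : SPoly d) : ∃ N : ℝ, ∀ {ι : Type} {F : Filter ι}
    {L : ι → SPoly d →ₗ[ℂ] ℂ}
    (_ : ∀ p, ∀ᶠ t in F, 0 ≤ L t (p * sconj p))
    (_ : ∀ p, ∀ᶠ t in F, L t (sphX d * p) = 0)
    (_ : ∀ p, ∀ᶠ t in F, L t (sphY d * p) = 0),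
    ∀ᶠ t in F, ‖L t p‖ ≤ N * ‖L t 1‖ := by
  have sq : ∀ q : SPoly d, ∃ N : ℝ, ∀ {ι : Type} {F : Filter ι} {L : ι → SPoly d →ₗ[ℂ] ℂ}
      (_ : ∀ p, ∀ᶠ t in F, 0 ≤ L t (p * sconj p))
      (_ : ∀ p, ∀ᶠ t in F, L t (sphX d * p) = 0)
      (_ : ∀ p, ∀ᶠ t in F, L t (sphY d * p) = 0),
      ∀ᶠ t in F, ‖L t (q * sconj q)‖ ≤ N * ‖L t 1‖ := by
    intro q
    obtain ⟨N, hN, h⟩ := bdd q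
    refine ⟨N, fun h0 hX hY => ?_⟩
    filter_upwards [h0 q, cone_eventually h0 hX hY h] with t h1 h2
    rw [map_sub, map_C, sub_nonneg] at h2
    have := CStarAlgebra.norm_le_norm_of_nonneg_of_le h1 h2
    simpa [abs_of_nonneg hN] using this
  obtain ⟨N1, h1⟩ := sq (p + 1)
  obtain ⟨N2, h2⟩ := sq (p + C Complex.I)
  obtain ⟨N3, h3⟩ := sq (p - 1)
  obtain ⟨N4, h4⟩ := sq (p - C Complex.I)
  refine ⟨1 / 4 * (N1 + N2 + N3 + N4), fun h0 hX hY => ?_⟩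
  filter_upwards [h1 h0 hX hY, h2 h0 hX hY, h3 h0 hX hY, h4 h0 hX hY] with t g1 g2 g3 g4
  rw [polarize p]
  rw [map_C_mul, map_sub, map_sub, map_add, map_C_mul, map_C_mul, norm_mul]
  refine (mul_le_mul_of_nonneg_left ((norm_sub_le _ _).trans (add_le_add_left
    ((norm_sub_le _ _).trans (add_le_add_left (norm_add_le _ _) _)) _)) (norm_nonneg _)).trans ?_
  rw [norm_mul, norm_mul, Complex.norm_I, one_mul, one_mul]
  norm_num
  linarith

/-! ### Positive functionals and extreme states -/

/-- A linear functional that is nonnegative on Hermitian squares and annihilates the ideal of the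
two spheres. -/
structure IsPos (L : SPoly d →ₗ[ℂ] ℂ) : Prop where
  sq : ∀ p, 0 ≤ L (p * sconj p)
  sphX : ∀ p, L (sphX d * p) = 0
  sphY : ∀ p, L (sphY d * p) = 0

lemma IsPos.nonneg {L : SPoly d →ₗ[ℂ] ℂ} (hL : IsPos L) {q : SPoly d} (hq : q ∈ sqCone d) :
    0 ≤ L q :=
  Filter.eventually_pure.1 <|
    cone_eventually (F := pure ()) (L := fun _ => L) (fun p => by simpa using hL.sq p)
      (fun p => by simpa using hL.sphX p) (fun p => by simpa using hL.sphY p) hq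

/-- Along an ultrafilter, asymptotically positive functionals of bounded mass converge pointwise to
a positive functional. -/
lemma exists_limit {ι : Type} (F : Ultrafilter ι) {L : ι → SPoly d →ₗ[ℂ] ℂ}
    (h0 : ∀ p, ∀ᶠ t in F, 0 ≤ L t (p * sconj p))
    (hX : ∀ p, ∀ᶠ t in F, L t (sphX d * p) = 0)
    (hY : ∀ p, ∀ᶠ t in F, L t (sphY d * p) = 0)
    {B : ℝ} (hB : ∀ᶠ t in F, ‖L t 1‖ ≤ B) :
    ∃ M : SPoly d →ₗ[ℂ] ℂ, IsPos M ∧ ∀ p, Filter.Tendsto (fun t => L t p) F (nhds (M p)) := by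
  have key : ∀ p, ∃ z, Filter.Tendsto (fun t => L t p) F (nhds z) := by
    intro p
    obtain ⟨N, hN⟩ := bound_eventually p
    have hmem : ∀ᶠ t in F, L t p ∈ Metric.closedBall (0 : ℂ) (|N| * B) := by
      filter_upwards [hN h0 hX hY, hB] with t h1 h2
      rw [mem_closedBall_zero_iff]
      calc _ ≤ N * ‖L t 1‖ := h1
        _ ≤ |N| * ‖L t 1‖ := by gcongr; exact le_abs_self N
        _ ≤ _ := by gcongr
    obtain ⟨z, -, hz⟩ := (isCompact_closedBall (0 : ℂ) (|N| * B)).ultrafilter_le_nhds'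
      (F.map fun t => L t p) hmem
    exact ⟨z, hz⟩
  choose φ hφ using key
  refine ⟨{ toFun := φ, map_add' := fun p q => ?_, map_smul' := fun c p => ?_ }, ⟨fun p => ?_,
    fun p => ?_, fun p => ?_⟩, hφ⟩
  · refine tendsto_nhds_unique (hφ (p + q)) ?_
    simpa using (hφ p).add (hφ q)
  · refine tendsto_nhds_unique (hφ (c • p)) ?_
    simpa using (hφ p).const_mul c
  · exact ge_of_tendsto (hφ _) (h0 p)
  · exact tendsto_nhds_unique (hφ _) (tendsto_const_nhds.congr' ((hX p).mono fun t h => h.symm))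
  · exact tendsto_nhds_unique (hφ _) (tendsto_const_nhds.congr' ((hY p).mono fun t h => h.symm))

/-- The state space: normalized positive functionals, viewed inside the locally convex space of all
functions `SPoly d → ℂ` with the topology of pointwise convergence. -/
def states (d : ℕ) : Set (SPoly d → ℂ) :=
  {φ | ∃ L : SPoly d →ₗ[ℂ] ℂ, IsPos L ∧ L 1 = 1 ∧ ⇑L = φ}

/-- Compactness of the state space: an ultrafilter on it is an indexed family of states, to which
`exists_limit` applies. -/
lemma isCompact_states : IsCompact (states d) := by
  classical
  rw [isCompact_iff_ultrafilter_le_nhds']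
  intro F hF
  let L : (SPoly d → ℂ) → SPoly d →ₗ[ℂ] ℂ := fun φ => if h : φ ∈ states d then h.choose else 0
  have hL : ∀ᶠ φ in F, IsPos (L φ) ∧ L φ 1 = 1 ∧ ⇑(L φ) = φ := by
    filter_upwards [hF] with φ h
    simp only [L, dif_pos h]
    exact h.choose_spec
  obtain ⟨M, hM, hlim⟩ := exists_limit F (L := L) (B := 1)
    (fun p => hL.mono fun φ h => h.1.sq p) (fun p => hL.mono fun φ h => h.1.sphX p)
    (fun p => hL.mono fun φ h => h.1.sphY p) (hL.mono fun φ h => by simp [h.2.1])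
  refine ⟨M, ⟨M, hM, ?_, rfl⟩, ?_⟩
  · exact tendsto_nhds_unique (hlim 1)
      (tendsto_const_nhds.congr' (hL.mono fun φ h => h.2.1.symm))
  · have : Filter.Tendsto id (F : Filter (SPoly d → ℂ)) (nhds ⇑M) := by
      rw [tendsto_pi_nhds]
      intro p
      exact (hlim p).congr' (hL.mono fun φ h => by rw [h.2.2]; rfl)
    exact this

lemma ofReal_mul_nonneg {a : ℝ} (ha : 0 ≤ a) {z : ℂ} (hz : 0 ≤ z) : 0 ≤ (a : ℂ) * z :=
  mul_nonneg (by exact_mod_cast ha) hz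

lemma convex_states : Convex ℝ (states d) := by
  rintro _ ⟨L, hL, hL1, rfl⟩ _ ⟨M, hM, hM1, rfl⟩ a b ha hb hab
  refine ⟨(a : ℂ) • L + (b : ℂ) • M, ⟨fun p => ?_, fun p => ?_, fun p => ?_⟩, ?_, ?_⟩
  · exact add_nonneg (ofReal_mul_nonneg ha (hL.sq p)) (ofReal_mul_nonneg hb (hM.sq p))
  · simp [hL.sphX, hM.sphX]
  · simp [hL.sphY, hM.sphY]
  · simp [hL1, hM1, ← Complex.ofReal_add, hab]
  · ext p; simp

/-- If `p ↦ L (g p)` is nonnegative on Hermitian squares and has mass `L g = r > 0`, then dividing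
it by `r` gives a state. -/
lemma mul_state {L : SPoly d →ₗ[ℂ] ℂ} (hL : IsPos L) {g : SPoly d} {r : ℝ} (hr : 0 < r)
    (hg : ∀ p, 0 ≤ L (g * (p * sconj p))) (hgr : L g = r) :
    ⇑(((r⁻¹ : ℝ) : ℂ) • L ∘ₗ LinearMap.mulLeft ℂ g) ∈ states d := by
  have hr' : (r : ℂ) ≠ 0 := by exact_mod_cast hr.ne'
  refine ⟨_, ⟨fun p => ?_, fun p => ?_, fun p => ?_⟩, ?_, rfl⟩
  · exact ofReal_mul_nonneg (inv_nonneg.2 hr.le) (hg p)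
  · have := hL.sphX (g * p)
    rw [mul_left_comm] at this
    simp [this]
  · have := hL.sphY (g * p)
    rw [mul_left_comm] at this
    simp [this]
  · simp [hgr, hr']

/-- If `L` is extreme and `L (h h̄) > 0`, the state `p ↦ L (h h̄ p) / L (h h̄)` equals `L`: with `N` a
bound for `h h̄`, the functional `L` is a proper convex combination of this state and of the
normalization of `p ↦ L ((N + 1 - h h̄) p)`. -/
lemma extreme_sq_mul {L : SPoly d →ₗ[ℂ] ℂ} (hL : IsPos L) (h1 : L 1 = 1)
    (hext : ⇑L ∈ (states d).extremePoints ℝ) (h p : SPoly d) :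
    L (h * sconj h * p) = L (h * sconj h) * L p := by
  obtain ⟨N, hN, hbd⟩ := bdd h
  have hnn : ∀ q, 0 ≤ L (h * sconj h * (q * sconj q)) := fun q =>
    hL.nonneg (sq_mul_mem h (sq_mem q))
  obtain ⟨r, hr0, hr⟩ : ∃ r : ℝ, 0 ≤ r ∧ L (h * sconj h) = r := by
    have := hL.sq h
    exact ⟨_, (Complex.nonneg_iff.1 this).1, Complex.ext rfl (Complex.nonneg_iff.1 this).2.symm⟩
  rcases hr0.eq_or_lt with rfl | hr0
  · -- here `L (h h̄ q q̄) = 0` for all `q`, as it lies between `0` and a multiple of `L (h h̄) = 0`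
    have hz : ∀ q, L (h * sconj h * (q * sconj q)) = 0 := by
      intro q
      obtain ⟨K, -, hq⟩ := bdd q
      have := hL.nonneg (sq_mul_mem h hq)
      rw [mul_sub, map_sub, mul_comm _ (C _), map_C_mul, hr, Complex.ofReal_zero, mul_zero,
        sub_nonneg] at this
      exact le_antisymm this (hnn q)
    have hp : h * sconj h * p = C (1 / 4) * (h * sconj h * ((p + 1) * sconj (p + 1))
        + C Complex.I * (h * sconj h * ((p + C Complex.I) * sconj (p + C Complex.I)))
        - h * sconj h * ((p - 1) * sconj (p - 1))
        - C Complex.I * (h * sconj h * ((p - C Complex.I) * sconj (p - C Complex.I)))) := by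
      linear_combination h * sconj h * polarize p
    rw [hp, map_C_mul, map_sub, map_sub, map_add, map_C_mul, map_C_mul, hz, hz, hz, hz, hr]
    simp
  · -- using `N + 1` rather than `N` keeps the second weight strictly positive
    have hle : r ≤ N := by
      have := hL.nonneg hbd
      rw [map_sub, map_C, h1, hr, mul_one, sub_nonneg] at this
      exact_mod_cast this
    have hs : 0 < N + 1 - r := by linarith
    have hN1 : 0 < N + 1 := by linarith
    have m1 := mul_state hL hr0 hnn hr
    have m2 := mul_state hL (g := C ((N + 1 : ℝ) : ℂ) - h * sconj h) hs (fun q => by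
      refine hL.nonneg ?_
      convert add_mem (sq_mul_mem q hbd) (sq_mem q) using 1
      push_cast
      rw [C_add, C_1]; ring) (by rw [map_sub, map_C, h1, hr]; push_cast; ring)
    have hseg := (mem_extremePoints.1 hext).2 _ m1 _ m2
      ⟨r / (N + 1), (N + 1 - r) / (N + 1), by positivity, by positivity, by field_simp; ring, by
        have e1 : (r : ℂ) ≠ 0 := by exact_mod_cast hr0.ne'
        have e2 : ((N + 1 - r : ℝ) : ℂ) ≠ 0 := by exact_mod_cast hs.ne'
        have e3 : ((N + 1 : ℝ) : ℂ) ≠ 0 := by exact_mod_cast hN1.ne'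
        ext q
        simp only [Pi.add_apply, Pi.smul_apply, LinearMap.smul_apply, LinearMap.comp_apply,
          LinearMap.mulLeft_apply, sub_mul, map_sub, map_C_mul, smul_eq_mul, Complex.real_smul,
          Complex.ofReal_inv, Complex.ofReal_div]
        field_simp
        ring⟩
    have := congrFun hseg.1 p
    simp only [LinearMap.smul_apply, LinearMap.comp_apply, LinearMap.mulLeft_apply, smul_eq_mul,
      Complex.ofReal_inv] at this
    have e1 : (r : ℂ) ≠ 0 := by exact_mod_cast hr0.ne'
    rw [hr, ← this]
    field_simp

/-- Extreme states are multiplicative: the case of a factor `h h̄` extends by polarization. -/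
lemma extreme_mul {L : SPoly d →ₗ[ℂ] ℂ} (hL : IsPos L) (h1 : L 1 = 1)
    (hext : ⇑L ∈ (states d).extremePoints ℝ) (p q : SPoly d) : L (p * q) = L p * L q := by
  have hp : p * q = C (1 / 4) * ((p + 1) * sconj (p + 1) * q
      + C Complex.I * ((p + C Complex.I) * sconj (p + C Complex.I) * q)
      - (p - 1) * sconj (p - 1) * q
      - C Complex.I * ((p - C Complex.I) * sconj (p - C Complex.I) * q)) := by
    linear_combination q * polarize p
  have hp' := congrArg L (polarize p)
  rw [map_C_mul, map_sub, map_sub, map_add, map_C_mul, map_C_mul] at hp'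
  rw [hp, hp', map_C_mul, map_sub, map_sub, map_add, map_C_mul, map_C_mul]
  simp only [extreme_sq_mul hL h1 hext]
  ring

/-- A positive functional is Hermitian. -/
lemma IsPos.map_sconj {L : SPoly d →ₗ[ℂ] ℂ} (hL : IsPos L) (p : SPoly d) :
    L (sconj p) = starRingEnd ℂ (L p) := by
  have hp : sconj p = C (1 / 4) * ((p + 1) * sconj (p + 1)
      - C Complex.I * ((p + C Complex.I) * sconj (p + C Complex.I))
      - (p - 1) * sconj (p - 1)
      + C Complex.I * ((p - C Complex.I) * sconj (p - C Complex.I))) := by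
    have h4 : (C (1 / 4 : ℂ) : SPoly d) * 4 = 1 := by
      have : (4 : SPoly d) = C 4 := (map_ofNat C 4).symm
      rw [this, ← C_mul]; norm_num
    have hI : (C Complex.I : SPoly d) * C Complex.I = -1 := by
      rw [← C_mul, Complex.I_mul_I]; simp
    simp only [sconj_add, sconj_sub, sconj_one, sconj_C, Complex.conj_I, C_neg]
    linear_combination (-sconj p) * h4 - C (1 / 4) * (2 * p - 2 * sconj p) * hI
  have hr : ∀ q, starRingEnd ℂ (L (q * sconj q)) = L (q * sconj q) := fun q =>
    Complex.conj_eq_iff_im.2 (Complex.nonneg_iff.1 (hL.sq q)).2.symm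
  have hp' := congrArg L (polarize p)
  rw [map_C_mul, map_sub, map_sub, map_add, map_C_mul, map_C_mul] at hp'
  rw [hp, hp', map_C_mul, map_add, map_sub, map_sub, map_C_mul, map_C_mul]
  simp only [map_mul, map_add, map_sub, hr, Complex.conj_I, map_div₀, map_one, map_ofNat]
  ring

/-! ### Convex hulls of compact sets -/

/-- In finite dimension the convex hull of a compact set is compact: by Carathéodory it is the image
of a compact set of weights and points with a fixed number of terms. -/
lemma isCompact_convexHull_of_isCompact {E : Type*} [AddCommGroup E] [Module ℝ E]
    [TopologicalSpace E] [ContinuousAdd E] [ContinuousSMul ℝ E] [FiniteDimensional ℝ E] {s : Set E}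
    (hs : IsCompact s) : IsCompact (convexHull ℝ s) := by
  classical
  rcases s.eq_empty_or_nonempty with rfl | ⟨z₀, hz₀⟩
  · simp
  let n := Module.finrank ℝ E + 1
  let f : (Fin n → ℝ) × (Fin n → E) → E := fun u => ∑ i, u.1 i • u.2 i
  have hf : Continuous f := by fun_prop
  have hK : IsCompact (stdSimplex ℝ (Fin n) ×ˢ Set.univ.pi fun _ : Fin n => s) :=
    (isCompact_stdSimplex ℝ (Fin n)).prod (isCompact_univ_pi fun _ => hs)
  convert hK.image hf using 1
  apply Set.Subset.antisymm
  · intro x hx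
    obtain ⟨ι, _, z, w, hz, haff, hw, hw1, rfl⟩ := eq_pos_convex_span_of_mem_convexHull hx
    have hcard : Fintype.card ι ≤ Fintype.card (Fin n) := by
      simpa [n] using haff.card_le_finrank_succ.trans
        (Nat.add_le_add_right (Submodule.finrank_le _) 1)
    obtain ⟨e⟩ := Function.Embedding.nonempty_of_card_le hcard
    -- missing terms are filled up with weight `0` at the point `z₀`
    have hw' : ∀ i, Function.extend e w 0 (e i) = w i := fun i => e.injective.extend_apply _ _ _
    have hz' : ∀ i, Function.extend e z (fun _ => z₀) (e i) = z i :=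
      fun i => e.injective.extend_apply _ _ _
    have h0 : ∀ k, k ∉ Set.range e → Function.extend e w 0 k = 0 := fun k hk =>
      Function.extend_apply' _ _ _ hk
    refine ⟨(Function.extend e w 0, Function.extend e z fun _ => z₀), ⟨⟨fun k => ?_, ?_⟩, ?_⟩, ?_⟩
    · by_cases hk : k ∈ Set.range e
      · obtain ⟨i, rfl⟩ := hk
        exact (hw i).le.trans_eq (hw' i).symm
      · exact (h0 k hk).ge
    · rw [← hw1]
      exact (Fintype.sum_of_injective e e.injective _ _ h0 fun i => (hw' i).symm).symm
    · intro k _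
      by_cases hk : k ∈ Set.range e
      · obtain ⟨i, rfl⟩ := hk
        simp only [hz']; exact hz ⟨i, rfl⟩
      · simp only [Function.extend_apply' _ _ _ hk]; exact hz₀
    · exact (Fintype.sum_of_injective e e.injective _ _ (fun k hk => by simp [h0 k hk])
        fun i => by simp only [hw', hz']).symm
  · rintro _ ⟨⟨w, z⟩, ⟨⟨hw, hw1⟩, hz⟩, rfl⟩
    exact mem_convexHull_of_exists_fintype w z hw hw1 (fun i => hz i trivial) rfl

/-! ### Moment matrices of states -/

/-- The normalized pure product states. -/
def pureStates (d : ℕ) : Set (Matrix (Fin d × Fin d) (Fin d × Fin d) ℂ) :=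
  (fun u : (Fin d → ℂ) × (Fin d → ℂ) => pureState d u.1 u.2) ''
    ({x | ∑ i, Complex.normSq (x i) = 1} ×ˢ {y | ∑ i, Complex.normSq (y i) = 1})

lemma isCompact_sphere_pi : IsCompact {x : Fin d → ℂ | ∑ i, Complex.normSq (x i) = 1} := by
  refine Metric.isCompact_of_isClosed_isBounded ?_ ?_
  · exact isClosed_eq (by fun_prop) continuous_const
  · refine (Metric.isBounded_closedBall (x := (0 : Fin d → ℂ)) (r := 1)).subset fun x hx => ?_
    rw [mem_closedBall_zero_iff, pi_norm_le_iff_of_nonneg zero_le_one]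
    intro i
    have h1 : Complex.normSq (x i) ≤ 1 := by
      rw [← show _ = (1 : ℝ) from hx]
      exact Finset.single_le_sum (f := fun i => Complex.normSq (x i))
        (fun j _ => Complex.normSq_nonneg _) (Finset.mem_univ i)
    rw [Complex.normSq_eq_norm_sq] at h1
    exact (sq_le_one_iff₀ (norm_nonneg _)).1 h1

lemma isCompact_pureStates : IsCompact (pureStates d) := by
  refine (isCompact_sphere_pi.prod isCompact_sphere_pi).image ?_
  refine continuous_matrix fun p q => ?_
  simp only [pureState, Matrix.of_apply]
  fun_prop

/-- Nonnegative multiples of convex combinations of pure product states are separable. -/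
lemma smul_mem_SEP {c : ℝ} (hc : 0 ≤ c) {ρ : Matrix (Fin d × Fin d) (Fin d × Fin d) ℂ}
    (hρ : ρ ∈ convexHull ℝ (pureStates d)) : (c : ℂ) • ρ ∈ SEP d := by
  obtain ⟨ι, _, w, z, hw, -, hz, rfl⟩ := mem_convexHull_iff_exists_fintype.1 hρ
  choose u hu huz using hz
  let e := (Fintype.equivFin ι).symm
  refine ⟨Fintype.card ι, fun l => c * w (e l), fun l => (u (e l)).1, fun l => (u (e l)).2,
    fun l => mul_nonneg hc (hw _), fun l => (hu (e l)).1, fun l => (hu (e l)).2, ?_⟩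
  rw [Finset.smul_sum, ← e.sum_comp]
  refine Finset.sum_congr rfl fun l _ => ?_
  rw [← huz]
  ext p q
  simp [mul_assoc]

/-- The matrix of degree-four moments of a function on polynomials. -/
noncomputable def momMap (d : ℕ) :
    (SPoly d → ℂ) →ₗ[ℝ] Matrix (Fin d × Fin d) (Fin d × Fin d) ℂ where
  toFun φ := Matrix.of fun p q => φ (momPoly p.1 q.1 p.2 q.2)
  map_add' _ _ := rfl
  map_smul' _ _ := rfl

lemma momMap_apply (φ : SPoly d → ℂ) (p q : Fin d × Fin d) :
    momMap d φ p q = φ (momPoly p.1 q.1 p.2 q.2) := rfl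

lemma continuous_momMap : Continuous (momMap d) :=
  continuous_matrix fun _ _ => continuous_apply _

/-- An extreme state is evaluation at a point of the product of spheres, so its moment matrix is a
pure product state. -/
lemma momMap_extreme {φ : SPoly d → ℂ} (hφ : φ ∈ (states d).extremePoints ℝ) :
    momMap d φ ∈ pureStates d := by
  obtain ⟨L, hL, h1, rfl⟩ := extremePoints_subset hφ
  have hmul := extreme_mul hL h1 hφ
  have hx : ∀ i, L (X (xbv i)) = starRingEnd ℂ (L (X (xv i))) := fun i => by
    rw [← hL.map_sconj, sconj_xv]
  have hy : ∀ i, L (X (ybv i)) = starRingEnd ℂ (L (X (yv i))) := fun i => by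
    rw [← hL.map_sconj, sconj_yv]
  refine ⟨(fun i => L (X (xv i)), fun i => L (X (yv i))), ⟨?_, ?_⟩, ?_⟩
  · have := hL.sphX 1
    simp only [sphX, mul_one, map_sub, h1, map_sum, hmul, hx, Complex.mul_conj] at this
    exact_mod_cast (sub_eq_zero.1 this).symm
  · have := hL.sphY 1
    simp only [sphY, mul_one, map_sub, h1, map_sum, hmul, hy, Complex.mul_conj] at this
    exact_mod_cast (sub_eq_zero.1 this).symm
  · ext p q
    simp only [pureState, momMap_apply, momPoly, Matrix.of_apply, hmul, hx, hy]
    ring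

/-- Krein–Milman: the moments of a state are a convex combination of pure product states. -/
lemma momMap_state {φ : SPoly d → ℂ} (hφ : φ ∈ states d) :
    momMap d φ ∈ convexHull ℝ (pureStates d) := by
  rw [← closure_convexHull_extremePoints isCompact_states convex_states] at hφ
  have h := image_closure_subset_closure_image continuous_momMap (Set.mem_image_of_mem (momMap d) hφ)
  rw [LinearMap.image_convexHull] at h
  refine closure_minimal (convexHull_mono ?_)
    (isCompact_convexHull_of_isCompact isCompact_pureStates).isClosed h
  rintro _ ⟨ψ, hψ, rfl⟩
  exact momMap_extreme hψ

/-- The trace of the moment matrix is the mass, modulo the ideal of the two spheres. -/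
lemma one_sub_trace : (1 : SPoly d) - ∑ i, ∑ j, momPoly i i j j
    = sphX d * 1 + sphY d * ∑ i, X (xv i) * X (xbv i) := by
  have : ∑ i, ∑ j, (momPoly i i j j : SPoly d)
      = (∑ i, X (xv i) * X (xbv i)) * ∑ j, X (yv j) * X (ybv j) := by
    rw [Finset.sum_mul_sum]
    simp only [momPoly, mul_assoc]
  rw [this, sphX, sphY]; ring

/-! ### The two inclusions -/

/-- The functionals `L_t` witnessing `ρ ∈ Rt d t` have a limit along an ultrafilter; it is a
nonnegative multiple of a state with moment matrix `ρ`. -/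
lemma iInter_Rt_subset_SEP {ρ : Matrix (Fin d × Fin d) (Fin d × Fin d) ℂ}
    (hρ : ∀ t, 2 ≤ t → ρ ∈ Rt d t) : ρ ∈ SEP d := by
  choose L _ hmom hX hY hsq using fun t : ℕ => (hρ (t + 2) (by omega)).2
  let F : Ultrafilter ℕ := Ultrafilter.of Filter.atTop
  have hF : ∀ n : ℕ, ∀ᶠ t in F, n ≤ t := fun n =>
    Ultrafilter.of_le Filter.atTop (Filter.eventually_ge_atTop n)
  have h0 : ∀ p, ∀ᶠ t in F, 0 ≤ L t (p * sconj p) := fun p =>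
    (hF p.totalDegree).mono fun t ht => hsq t p (by omega)
  have hX' : ∀ p, ∀ᶠ t in F, L t (sphX d * p) = 0 := fun p =>
    (hF (sphX d * p).totalDegree).mono fun t ht => hX t p (by rw [sphX] at ht; omega)
  have hY' : ∀ p, ∀ᶠ t in F, L t (sphY d * p) = 0 := fun p =>
    (hF (sphY d * p).totalDegree).mono fun t ht => hY t p (by rw [sphY] at ht; omega)
  -- the mass of `L t` is eventually the trace of `ρ`
  have hone : ∀ᶠ t in F, L t 1 = ∑ i, ∑ j, ρ (i, j) (i, j) := by
    filter_upwards [hX' 1, hY' (∑ i, X (xv i) * X (xbv i))] with t h1 h2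
    have := congrArg (L t) (one_sub_trace (d := d))
    rw [map_sub, map_add, h1, h2, add_zero, sub_eq_zero] at this
    rw [this, map_sum]
    simp only [map_sum, hmom]
  obtain ⟨M, hM, hlim⟩ := exists_limit F h0 hX' hY' (hone.mono fun t h => (congrArg _ h).le)
  have hMmom : ∀ i i' j j', M (momPoly i i' j j') = ρ (i, j) (i', j') := fun i i' j j' =>
    tendsto_nhds_unique (hlim _) (by simp only [hmom]; exact tendsto_const_nhds)
  have hρM : ρ = momMap d M := by
    ext ⟨i, j⟩ ⟨i', j'⟩
    exact (hMmom i i' j j').symm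
  obtain ⟨r, hr0, hr⟩ : ∃ r : ℝ, 0 ≤ r ∧ M 1 = r := by
    have := hM.sq 1
    rw [sconj_one, mul_one] at this
    exact ⟨_, (Complex.nonneg_iff.1 this).1, Complex.ext rfl (Complex.nonneg_iff.1 this).2.symm⟩
  rcases hr0.eq_or_lt with rfl | hr0
  · -- a positive functional of mass `0` vanishes
    have hM0 : ∀ p, M p = 0 := by
      intro p
      obtain ⟨N, hN⟩ := bound_eventually p
      have := Filter.eventually_pure.1 <| hN (F := pure ()) (L := fun _ => M)
        (fun p => by simpa using hM.sq p) (fun p => by simpa using hM.sphX p)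
        (fun p => by simpa using hM.sphY p)
      simpa [hr] using this
    refine ⟨0, Fin.elim0, Fin.elim0, Fin.elim0, fun l => l.elim0, fun l => l.elim0,
      fun l => l.elim0, ?_⟩
    rw [hρM]
    ext p q
    simp [momMap_apply, hM0]
  · have hs := mul_state hM (g := 1) hr0 (fun p => by simpa using hM.sq p) hr
    have := smul_mem_SEP hr0.le (momMap_state hs)
    convert this using 1
    have hr' : (r : ℂ) ≠ 0 := by exact_mod_cast hr0.ne'
    rw [hρM]
    ext p q
    simp [momMap_apply, hr']

/-- Evaluation of polynomials at the point `(x, x̄, y, ȳ)`. -/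
noncomputable def evalPt (x y : Fin d → ℂ) : SPoly d →ₐ[ℂ] ℂ :=
  aeval (Sum.elim (Sum.elim x fun i => starRingEnd ℂ (x i))
    (Sum.elim y fun i => starRingEnd ℂ (y i)))

lemma evalPt_sconj (x y : Fin d → ℂ) (p : SPoly d) :
    evalPt x y (sconj p) = starRingEnd ℂ (evalPt x y p) := by
  induction p using MvPolynomial.induction_on with
  | C c => rw [sconj_C]; simp [evalPt]
  | add p q hp hq => rw [sconj_add, map_add, hp, hq, map_add, map_add]
  | mul_X p v hp =>
    rw [sconj_mul, map_mul, hp, map_mul, map_mul]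
    congr 1
    rcases v with (i | i) | (i | i) <;> simp [evalPt, sconj]

lemma pureState_isHermitian (x y : Fin d → ℂ) : (pureState d x y).IsHermitian := by
  ext p q
  simp [pureState, Matrix.conjTranspose_apply]
  ring

/-- A separable matrix is the moment matrix of a positive combination of point evaluations. -/
lemma SEP_subset_Rt {ρ : Matrix (Fin d × Fin d) (Fin d × Fin d) ℂ} (hρ : ρ ∈ SEP d) (t : ℕ) :
    ρ ∈ Rt d t := by
  obtain ⟨r, c, x, y, hc, hx, hy, rfl⟩ := hρ
  refine ⟨?_, ∑ l, (c l : ℂ) • (evalPt (x l) (y l)).toLinearMap, ?_, ?_, ?_, ?_, ?_⟩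
  · rw [Matrix.IsHermitian, Matrix.conjTranspose_sum]
    refine Finset.sum_congr rfl fun l _ => ?_
    rw [Matrix.conjTranspose_smul, (pureState_isHermitian _ _).eq]
    simp
  · intro p
    simp [evalPt_sconj, LinearMap.sum_apply]
  · intro i i' j j'
    simp only [LinearMap.sum_apply, LinearMap.smul_apply, Matrix.sum_apply, Matrix.smul_apply]
    refine Finset.sum_congr rfl fun l _ => ?_
    simp [momPoly, evalPt, pureState, xv, xbv, yv, ybv, mul_assoc]
  · intro p _
    simp only [LinearMap.sum_apply, LinearMap.smul_apply]
    refine Finset.sum_eq_zero fun l _ => ?_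
    have : evalPt (x l) (y l) (1 - ∑ i, X (xv i) * X (xbv i)) = 0 := by
      have h : (∑ i, (Complex.normSq (x l i) : ℂ)) = 1 := by exact_mod_cast hx l
      simp [evalPt, xv, xbv, Complex.mul_conj, h]
    rw [AlgHom.toLinearMap_apply, map_mul, this, zero_mul, smul_zero]
  · intro p _
    simp only [LinearMap.sum_apply, LinearMap.smul_apply]
    refine Finset.sum_eq_zero fun l _ => ?_
    have : evalPt (x l) (y l) (1 - ∑ i, X (yv i) * X (ybv i)) = 0 := by
      have h : (∑ i, (Complex.normSq (y l i) : ℂ)) = 1 := by exact_mod_cast hy l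
      simp [evalPt, yv, ybv, Complex.mul_conj, h]
    rw [AlgHom.toLinearMap_apply, map_mul, this, zero_mul, smul_zero]
  · intro p _
    simp only [LinearMap.sum_apply, LinearMap.smul_apply]
    refine Finset.sum_nonneg fun l _ => ofReal_mul_nonneg (hc l) ?_
    rw [AlgHom.toLinearMap_apply, map_mul, evalPt_sconj, Complex.mul_conj]
    exact_mod_cast Complex.normSq_nonneg _

end SepHierarchy

/-- `SEP_d = ⋂_{t ≥ 2} 𝓡_t`. -/
theorem stmt13 (d : ℕ) :
    SEP d = ⋂ (t : ℕ), ⋂ (_ : 2 ≤ t), Rt d t := by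
  exact Set.Subset.antisymm
    (fun _ hρ => Set.mem_iInter₂.2 fun t _ => SepHierarchy.SEP_subset_Rt hρ t)
    fun _ hρ => SepHierarchy.iInter_Rt_subset_SEP (Set.mem_iInter₂.1 hρ)
end
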